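/- arXiv:2102.02708 — 7 statements merged into one kernel-verified Lean document; each statement's English description precedes it below -/
import Mathlib

section
/- Let 0 < α ≤ 1 and let f ∈ ℝ[z₁,…,zₙ] be a multiaffine polynomial with nonnegative coefficients, f(1,…,1) > 0, that is Γ_α-stable, and let μ be the distribution on subsets of [n] generated by f. Then for every index i with 0 < P[i] < 1, the ℓ₁-norm of the i-th row of the signed pairwise influence matrix is bounded: Σ_{j ≠ i} |P[j|i] − P[j|¬i]| ≤ 2/α − 1. -/
open Finset

/-- `z` lies in the open sector `Γ_α` of aperture `απ` centered on the positive real axis. -/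
def inSector (α : ℝ) (z : ℂ) : Prop := z ≠ 0 ∧ |z.arg| < α * Real.pi / 2

/-!
Fix a row `i`, put `z_i = z` and `z_j = exp (w s_j)` for `j ≠ i`, where `s_j = ±1` is the sign of
the influence of `i` on `j`. The polynomial becomes `z F₁(w) + F₀(w)`, with `F₁` and `F₀` collecting
the sets that contain, respectively avoid, `i`. All variables lie in `Γ_α` as long as `w` lies in
the strip `|Im w| < απ/2` and `z ∈ Γ_α`, so by stability `F₀ / F₁` avoids `-Γ_α`. Hence
`log (F₀ / F₁)` maps that strip into the strip `|Im w| ≤ π - απ/2`, and the Schwarz lemma between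
strips bounds its derivative at `0` by the ratio of the widths, which is `2/α - 1`. Up to sign, that
derivative is the `ℓ₁`-norm of the row.
-/

open Complex Metric Set Filter Topology

open scoped ComplexConjugate Real

section Schwarz

theorem norm_sub_le_norm_add_conj {z w : ℂ} (hz : 0 ≤ z.re) (hw : 0 ≤ w.re) :
    ‖z - w‖ ≤ ‖z + conj w‖ := by
  rw [← sq_le_sq₀ (norm_nonneg _) (norm_nonneg _), Complex.sq_norm, Complex.sq_norm,
    normSq_apply, normSq_apply]
  simp only [sub_re, sub_im, add_re, add_im, conj_re, conj_im]
  nlinarith [mul_nonneg hz hw]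

theorem norm_deriv_le_of_re_pos {f : ℂ → ℂ} {c : ℂ} {R : ℝ} (hR : 0 < R)
    (hf : DifferentiableOn ℂ f (ball c R)) (hre : ∀ z ∈ ball c R, 0 < (f z).re) :
    ‖deriv f c‖ ≤ 2 * (f c).re / R := by
  have hc : c ∈ ball c R := mem_ball_self hR
  have hpos : 0 < 2 * (f c).re := mul_pos two_pos (hre c hc)
  have hden : ∀ z ∈ ball c R, f z + conj (f c) ≠ 0 := fun z hz ↦
    ne_zero_of_re_pos (by rw [add_re, conj_re]; exact add_pos (hre z hz) (hre c hc))
  have hcayley : DifferentiableOn ℂ (fun z ↦ (f z - f c) / (f z + conj (f c))) (ball c R) :=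
    (hf.sub_const _).div (hf.add_const _) hden
  have hmaps : MapsTo (fun z ↦ (f z - f c) / (f z + conj (f c))) (ball c R)
      (closedBall ((f c - f c) / (f c + conj (f c))) 1) := by
    intro z hz
    rw [sub_self, zero_div, mem_closedBall_zero_iff, norm_div,
      div_le_one (norm_pos_iff.2 (hden z hz))]
    exact norm_sub_le_norm_add_conj (hre z hz).le (hre c hc).le
  have hderiv : HasDerivAt (fun z ↦ (f z - f c) / (f z + conj (f c)))
      (deriv f c / (f c + conj (f c))) c := by
    have hfc := (hf.differentiableAt (isOpen_ball.mem_nhds hc)).hasDerivAt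
    refine ((hfc.sub_const _).div (hfc.add_const _) (hden c hc)).congr_deriv ?_
    field_simp [hden c hc]
    ring
  have hschwarz := norm_deriv_le_div_of_mapsTo_ball hcayley hmaps hR
  rw [hderiv.deriv, norm_div, add_conj, norm_real, Real.norm_eq_abs,
    abs_of_pos hpos, div_le_iff₀ hpos] at hschwarz
  exact hschwarz.trans_eq (by ring)

/-- The open horizontal strip of width `2 * a` centered on the real axis. -/
def strip (a : ℝ) : Set ℂ := {w | |w.im| < a}

theorem isOpen_strip (a : ℝ) : IsOpen (strip a) :=
  isOpen_lt (continuous_abs.comp continuous_im) continuous_const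

theorem isPreconnected_strip (a : ℝ) : IsPreconnected (strip a) := by
  have hstrip : strip a = imCLM ⁻¹' Ioo (-a) a :=
    Set.ext fun _ ↦ abs_lt (α := ℝ)
  exact hstrip ▸ ((convex_Ioo (-a) a).linear_preimage imCLM.toLinearMap).isPreconnected

theorem zero_mem_strip {a : ℝ} (ha : 0 < a) : (0 : ℂ) ∈ strip a := by
  simpa [strip] using ha

theorem norm_deriv_le_of_mapsTo_strip {f : ℂ → ℂ} {c : ℂ} {R b : ℝ} (hR : 0 < R)
    (hf : DifferentiableOn ℂ f (ball c R)) (hmaps : MapsTo f (ball c R) (strip b)) :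
    ‖deriv f c‖ ≤ 4 * b / (π * R) := by
  have hc : c ∈ ball c R := mem_ball_self hR
  have hb : 0 < b := (abs_nonneg _).trans_lt (hmaps hc)
  have hscale : 0 < π / (2 * b) := by positivity
  have hre : ∀ z ∈ ball c R, 0 < (exp (((π / (2 * b) : ℝ) : ℂ) * f z)).re := by
    intro z hz
    rw [exp_re, im_ofReal_mul]
    refine mul_pos (Real.exp_pos _) (Real.cos_pos_of_mem_Ioo (abs_lt.1 ?_))
    calc |π / (2 * b) * (f z).im| = π / (2 * b) * |(f z).im| := by rw [abs_mul, abs_of_pos hscale]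
      _ < π / (2 * b) * b := mul_lt_mul_of_pos_left (hmaps hz) hscale
      _ = π / 2 := by field_simp
  have hderiv := ((hf.differentiableAt (isOpen_ball.mem_nhds hc)).hasDerivAt.const_mul
    ((π / (2 * b) : ℝ) : ℂ)).cexp
  have hbound := norm_deriv_le_of_re_pos hR (hf.const_mul _).cexp hre
  rw [hderiv.deriv, norm_mul, norm_mul, norm_real, Real.norm_of_nonneg hscale.le] at hbound
  set E := exp (((π / (2 * b) : ℝ) : ℂ) * f c)
  have hle : ‖E‖ * (π / (2 * b) * ‖deriv f c‖) ≤ ‖E‖ * (2 / R) :=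
    calc _ ≤ 2 * E.re / R := hbound
      _ ≤ 2 * ‖E‖ / R := by gcongr; exact re_le_norm E
      _ = ‖E‖ * (2 / R) := by ring
  have hcancel := le_of_mul_le_mul_left hle (norm_pos_iff.2 (exp_ne_zero _))
  rw [← le_div_iff₀' hscale] at hcancel
  exact hcancel.trans_eq (by field_simp; norm_num)

theorem re_one_add_div_one_sub_pos {ζ : ℂ} (hζ : ‖ζ‖ < 1) : 0 < ((1 + ζ) / (1 - ζ)).re := by
  have hne : 1 - ζ ≠ 0 := sub_ne_zero.2 (by rintro rfl; simp at hζ)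
  have hre : ((1 + ζ) / (1 - ζ)).re = (1 - normSq ζ) / normSq (1 - ζ) := by
    rw [div_re, normSq_apply ζ]
    simp only [add_re, add_im, sub_re, sub_im, one_re, one_im]
    ring
  rw [hre, normSq_eq_norm_sq ζ]
  exact div_pos (by nlinarith [norm_nonneg ζ]) (normSq_pos.2 hne)

/-- The conformal map of the unit disk onto `strip a` that fixes `0` with positive derivative. -/
noncomputable def diskToStrip (a : ℝ) (ζ : ℂ) : ℂ :=
  ((2 * a / π : ℝ) : ℂ) * log ((1 + ζ) / (1 - ζ))

theorem diskToStrip_zero (a : ℝ) : diskToStrip a 0 = 0 := by simp [diskToStrip]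

theorem hasDerivAt_diskToStrip (a : ℝ) {ζ : ℂ} (hζ : ‖ζ‖ < 1) :
    HasDerivAt (diskToStrip a) ((4 * a / π : ℝ) / (1 - ζ ^ 2)) ζ := by
  have hpos := re_one_add_div_one_sub_pos hζ
  have hsub : 1 - ζ ≠ 0 := fun h ↦ by simp [h] at hpos
  have hadd : 1 + ζ ≠ 0 := fun h ↦ by simp [h] at hpos
  have hsq : 1 - ζ ^ 2 ≠ 0 := by
    rw [show 1 - ζ ^ 2 = (1 - ζ) * (1 + ζ) by ring]; exact mul_ne_zero hsub hadd
  have hquot := (((hasDerivAt_id ζ).const_add 1).div ((hasDerivAt_id ζ).const_sub 1) hsub).clog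
    (.inl hpos)
  refine (hquot.const_mul ((2 * a / π : ℝ) : ℂ)).congr_deriv ?_
  simp only [id, Pi.div_apply]
  push_cast
  field_simp
  ring

theorem mapsTo_diskToStrip {a : ℝ} (ha : 0 < a) : MapsTo (diskToStrip a) (ball 0 1) (strip a) := by
  intro ζ hζ
  have harg := abs_arg_lt_pi_div_two_iff.2
    (.inl (re_one_add_div_one_sub_pos (mem_ball_zero_iff.1 hζ)))
  have hscale : 0 < 2 * a / π := by positivity
  rw [strip, mem_ofPred, diskToStrip, im_ofReal_mul, log_im, abs_mul, abs_of_pos hscale]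
  calc _ < 2 * a / π * (π / 2) := mul_lt_mul_of_pos_left harg hscale
    _ = a := by field_simp

theorem norm_deriv_zero_le_of_abs_im_le {f : ℂ → ℂ} {a b : ℝ} (ha : 0 < a)
    (hf : DifferentiableOn ℂ f (strip a)) (hmaps : ∀ w ∈ strip a, |(f w).im| ≤ b) :
    ‖deriv f 0‖ ≤ b / a := by
  rw [le_div_iff₀ ha]
  refine le_of_forall_gt_imp_ge_of_dense fun b' hb' ↦ ?_
  have hφ : DifferentiableOn ℂ (diskToStrip a) (ball 0 1) := fun ζ hζ ↦
    (hasDerivAt_diskToStrip a (mem_ball_zero_iff.1 hζ)).differentiableAt.differentiableWithinAt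
  have hbound := norm_deriv_le_of_mapsTo_strip one_pos (hf.comp hφ (mapsTo_diskToStrip ha))
    (b := b') fun ζ hζ ↦ (hmaps _ (mapsTo_diskToStrip ha hζ)).trans_lt hb'
  have hf0 : DifferentiableAt ℂ f (diskToStrip a 0) := by
    rw [diskToStrip_zero]
    exact hf.differentiableAt ((isOpen_strip a).mem_nhds (zero_mem_strip ha))
  rw [(hf0.hasDerivAt.comp 0 (hasDerivAt_diskToStrip a (by simp))).deriv, diskToStrip_zero,
    zero_pow two_ne_zero, sub_zero, div_one, norm_mul, norm_real,
    Real.norm_of_nonneg (by positivity)] at hbound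
  field_simp at hbound
  linarith

theorem norm_logDeriv_zero_le_of_abs_arg_le {g : ℂ → ℂ} {a b : ℝ} (ha : 0 < a) (hb : b < π)
    (hg : DifferentiableOn ℂ g (strip a)) (hne : ∀ w ∈ strip a, g w ≠ 0)
    (harg : ∀ w ∈ strip a, |(g w).arg| ≤ b) : ‖logDeriv g 0‖ ≤ b / a := by
  have hslit : ∀ w ∈ strip a, g w ∈ slitPlane := fun w hw ↦
    mem_slitPlane_iff_arg.2 ⟨fun h ↦ (((le_abs_self _).trans (harg w hw)).trans_lt hb).ne h,
      hne w hw⟩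
  have h0 := zero_mem_strip ha
  have hlog := (hg.differentiableAt ((isOpen_strip a).mem_nhds h0)).hasDerivAt.clog (hslit 0 h0)
  rw [logDeriv_apply, ← hlog.deriv]
  exact norm_deriv_zero_le_of_abs_im_le ha (hg.clog hslit) (by simpa only [log_im] using harg)

end Schwarz

theorem ne_zero_of_forall_mul_add_ne_zero {U A : Set ℂ} {f g : ℂ → ℂ}
    (hU : IsOpen U) (hUc : IsPreconnected U) (hf : AnalyticOnNhd ℂ f U) (hg : AnalyticOnNhd ℂ g U)
    (hA : (0 : ℂ) ∈ closure A) (hfg : ∀ w ∈ U, ∀ z ∈ A, z * g w + f w ≠ 0)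
    {w₀ : ℂ} (hw₀ : w₀ ∈ U) (hfw₀ : f w₀ ≠ 0) {w : ℂ} (hw : w ∈ U) : f w ≠ 0 := by
  intro hfw
  obtain ⟨z, hz⟩ := closure_nonempty_iff.1 ⟨0, hA⟩
  have hgw : g w ≠ 0 := fun h ↦ hfg w hw z hz (by rw [h, hfw, mul_zero, add_zero])
  have hg_ne : ∀ᶠ v in 𝓝 w, g v ≠ 0 := (hg w hw).continuousAt.eventually_ne hgw
  have hquot : AnalyticAt ℂ (fun v ↦ -f v / g v) w := (hf w hw).neg.div (hg w hw) hgw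
  have hquot_w : -f w / g w = 0 := by rw [hfw, neg_zero, zero_div]
  rcases hquot.eventually_constant_or_nhds_le_map_nhds with hconst | hopen
  · have hf_zero : f =ᶠ[𝓝 w] 0 := by
      filter_upwards [hconst, hg_ne] with v hv hgv
      rw [hquot_w, div_eq_zero_iff] at hv
      exact neg_eq_zero.1 (hv.resolve_right hgv)
    exact hfw₀ (hf.eqOn_zero_of_preconnected_of_eventuallyEq_zero hUc hw hf_zero hw₀)
  · rw [hquot_w] at hopen
    have himage : (fun v ↦ -f v / g v) '' {v ∈ U | g v ≠ 0} ∈ 𝓝 0 :=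
      hopen (image_mem_map ((hU.eventually_mem hw).and hg_ne))
    obtain ⟨_, ⟨v, ⟨hvU, hgv⟩, rfl⟩, hvA⟩ := mem_closure_iff_nhds.1 hA _ himage
    exact hfg v hvU _ hvA (by rw [div_mul_cancel₀ _ hgv, neg_add_cancel])

section Sector

variable {α : ℝ}

theorem inSector.inv {z : ℂ} (hz : inSector α z) : inSector α z⁻¹ :=
  ⟨inv_ne_zero hz.1, by rw [abs_arg_inv]; exact hz.2⟩

theorem inSector_ofReal (hα : 0 < α) {x : ℝ} (hx : 0 < x) : inSector α x :=
  ⟨ofReal_ne_zero.2 hx.ne', by rw [arg_ofReal_of_nonneg hx.le, abs_zero]; positivity⟩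

theorem zero_mem_closure_inSector (hα : 0 < α) : (0 : ℂ) ∈ closure {z | inSector α z} := by
  have hlim : Tendsto (fun x : ℝ ↦ (x : ℂ)) (𝓝[>] 0) (𝓝 0) :=
    (continuous_ofReal.tendsto' 0 0 ofReal_zero).mono_left nhdsWithin_le_nhds
  exact mem_closure_of_tendsto hlim
    (eventually_mem_nhdsWithin.mono fun x hx ↦ inSector_ofReal hα hx)

theorem abs_arg_exp_le (w : ℂ) : |(exp w).arg| ≤ |w.im| := by
  rcases lt_or_ge |w.im| π with hw | hw
  · rw [← log_im, log_exp (abs_lt.1 hw).1 (abs_lt.1 hw).2.le]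
  · exact (abs_arg_le_pi _).trans hw

theorem inSector_exp {w : ℂ} (hw : w ∈ strip (α * π / 2)) : inSector α (exp w) :=
  ⟨exp_ne_zero _, (abs_arg_exp_le w).trans_lt hw⟩

theorem abs_arg_neg {z : ℂ} (hz : z ≠ 0) : |(-z).arg| = π - |z.arg| := by
  rw [← angle_one_left hz, ← angle_one_left (neg_ne_zero.2 hz),
    InnerProductGeometry.angle_neg_right]

theorem abs_arg_le_of_not_inSector_neg {z : ℂ} (hz : z ≠ 0) (h : ¬ inSector α (-z)) :
    |z.arg| ≤ π - α * π / 2 := by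
  have harg : α * π / 2 ≤ |(-z).arg| := not_lt.1 fun hlt ↦ h ⟨neg_ne_zero.2 hz, hlt⟩
  rw [abs_arg_neg hz] at harg
  linarith

theorem norm_logDeriv_sub_logDeriv_le (hα : 0 < α) {F₀ F₁ : ℂ → ℂ}
    (hF₀ : DifferentiableOn ℂ F₀ (strip (α * π / 2)))
    (hF₁ : DifferentiableOn ℂ F₁ (strip (α * π / 2))) (h₀ : F₀ 0 ≠ 0) (h₁ : F₁ 0 ≠ 0)
    (hF : ∀ w ∈ strip (α * π / 2), ∀ z, inSector α z → z * F₁ w + F₀ w ≠ 0) :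
    ‖logDeriv F₀ 0 - logDeriv F₁ 0‖ ≤ 2 / α - 1 := by
  have hU := isOpen_strip (α * π / 2)
  have hUc := isPreconnected_strip (α * π / 2)
  have hzero : (0 : ℂ) ∈ strip (α * π / 2) := zero_mem_strip (by positivity)
  have hclosure := zero_mem_closure_inSector hα
  have hne₀ : ∀ w ∈ strip (α * π / 2), F₀ w ≠ 0 := fun w ↦
    ne_zero_of_forall_mul_add_ne_zero hU hUc (hF₀.analyticOnNhd hU) (hF₁.analyticOnNhd hU)
      hclosure hF hzero h₀
  have hF' : ∀ w ∈ strip (α * π / 2), ∀ z, inSector α z → z * F₀ w + F₁ w ≠ 0 := by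
    intro w hw z hz h
    refine hF w hw z⁻¹ hz.inv ?_
    rw [← mul_right_inj' hz.1, mul_add, mul_inv_cancel_left₀ hz.1, mul_zero, add_comm, h]
  have hne₁ : ∀ w ∈ strip (α * π / 2), F₁ w ≠ 0 := fun w ↦
    ne_zero_of_forall_mul_add_ne_zero hU hUc (hF₁.analyticOnNhd hU) (hF₀.analyticOnNhd hU)
      hclosure hF' hzero h₁
  have harg : ∀ w ∈ strip (α * π / 2), |(F₀ w / F₁ w).arg| ≤ π - α * π / 2 := by
    intro w hw
    refine abs_arg_le_of_not_inSector_neg (div_ne_zero (hne₀ w hw) (hne₁ w hw)) fun h ↦ ?_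
    exact hF w hw _ h (by rw [neg_mul, div_mul_cancel₀ _ (hne₁ w hw), neg_add_cancel])
  have hbound := norm_logDeriv_zero_le_of_abs_arg_le (by positivity)
    (sub_lt_self _ (by positivity)) (hF₀.div hF₁ hne₁)
    (fun w hw ↦ div_ne_zero (hne₀ w hw) (hne₁ w hw)) harg
  have hlogDeriv : logDeriv (F₀ / F₁) 0 = logDeriv F₀ 0 - logDeriv F₁ 0 :=
    logDeriv_div 0 h₀ h₁ (hF₀.differentiableAt (hU.mem_nhds hzero))
      (hF₁.differentiableAt (hU.mem_nhds hzero))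
  rw [← hlogDeriv]
  exact hbound.trans_eq (by field_simp)

end Sector

section ExpSum

variable {κ : Type*} (T : Finset κ) (c x : κ → ℝ)

/-- The exponential sum `∑ k ∈ T, c k * exp (w * x k)`, i.e. the moment generating function of `x`
under the weights `c` restricted to `T`. -/
noncomputable def expSum (w : ℂ) : ℂ := ∑ k ∈ T, (c k : ℂ) * exp (w * x k)

theorem expSum_zero : expSum T c x 0 = (∑ k ∈ T, c k : ℝ) := by
  simp [expSum]

theorem hasDerivAt_expSum (w : ℂ) :
    HasDerivAt (expSum T c x) (∑ k ∈ T, (c k : ℂ) * (exp (w * x k) * x k)) w :=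
  HasDerivAt.fun_sum fun k _ ↦ ((hasDerivAt_mul_const (x k : ℂ)).cexp).const_mul (c k : ℂ)

theorem differentiable_expSum : Differentiable ℂ (expSum T c x) := fun w ↦
  (hasDerivAt_expSum T c x w).differentiableAt

theorem logDeriv_expSum_zero :
    logDeriv (expSum T c x) 0 = ((∑ k ∈ T, c k * x k) / ∑ k ∈ T, c k : ℝ) := by
  rw [logDeriv_apply, (hasDerivAt_expSum T c x 0).deriv, expSum_zero]
  simp

end ExpSum

section Influence

variable {ι : Type*} [Fintype ι] [DecidableEq ι]

/-- The signed pairwise influence `P[j|i] - P[j|¬i]` under the weights `c`. The weights need not be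
normalized, since their total mass cancels in both conditional probabilities. -/
noncomputable def influence (c : Finset ι → ℝ) (i j : ι) : ℝ :=
  (∑ S with i ∈ S ∧ j ∈ S, c S) / (∑ S with i ∈ S, c S) -
    (∑ S with i ∉ S ∧ j ∈ S, c S) / (∑ S with i ∉ S, c S)

theorem sum_filter_mul_sum_mem {R : Type*} [CommSemiring R] (p : Finset ι → Prop) [DecidablePred p]
    (c : Finset ι → R) (s : ι → R) :
    ∑ S with p S, c S * ∑ j ∈ S, s j = ∑ j, s j * ∑ S with p S ∧ j ∈ S, c S := by
  simp_rw [mul_sum, mul_comm (s _)]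
  exact sum_comm' (by simp)

theorem sum_mul_influence (c : Finset ι → ℝ) (i : ι) (s : ι → ℝ) :
    ∑ j, s j * influence c i j =
      (∑ S with i ∈ S, c S * ∑ j ∈ S, s j) / (∑ S with i ∈ S, c S) -
        (∑ S with i ∉ S, c S * ∑ j ∈ S, s j) / (∑ S with i ∉ S, c S) := by
  simp only [influence, sum_filter_mul_sum_mem, mul_sub, sum_sub_distrib, sum_div, mul_div_assoc]

theorem sum_mul_prod_update {R : Type*} [CommSemiring R] (c : Finset ι → R) (z : ι → R) (i : ι)
    (x : R) :
    ∑ S, c S * ∏ j ∈ S, Function.update z i x j =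
      x * ∑ S with i ∈ S, c S * ∏ j ∈ S.erase i, z j + ∑ S with i ∉ S, c S * ∏ j ∈ S, z j := by
  rw [← sum_filter_add_sum_filter_not univ (i ∈ ·), mul_sum]
  congr 1 <;> refine sum_congr rfl fun S hS ↦ ?_
  · rw [prod_update_of_mem (mem_filter.1 hS).2, sdiff_singleton_eq_erase, mul_left_comm]
  · rw [prod_update_of_notMem (mem_filter.1 hS).2]

theorem sum_mul_prod_update_exp (c : Finset ι → ℝ) {s : ι → ℝ} {i : ι} (hsi : s i = 0) (z w : ℂ) :
    ∑ S, (c S : ℂ) * ∏ j ∈ S, Function.update (fun j ↦ exp (w * s j)) i z j =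
      z * expSum {S | i ∈ S} c (fun S ↦ ∑ j ∈ S, s j) w +
        expSum {S | i ∉ S} c (fun S ↦ ∑ j ∈ S, s j) w := by
  have hexp : ∀ S : Finset ι, ∏ j ∈ S, exp (w * s j) = exp (w * (∑ j ∈ S, s j : ℝ)) := fun S ↦ by
    rw [ofReal_sum, mul_sum, exp_sum]
  have herase : ∀ S : Finset ι, ∏ j ∈ S.erase i, exp (w * s j) = ∏ j ∈ S, exp (w * s j) := fun S ↦
    prod_erase S (by rw [hsi, ofReal_zero, mul_zero, exp_zero])
  simp only [sum_mul_prod_update, herase, hexp, expSum]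

variable {α : ℝ} {c : Finset ι → ℝ} {i : ι}

theorem sum_mul_influence_le_of_sector_stable (hα : 0 < α)
    (hstable : ∀ z : ι → ℂ, (∀ j, inSector α (z j)) → ∑ S, (c S : ℂ) * ∏ j ∈ S, z j ≠ 0)
    (h₁ : ∑ S with i ∈ S, c S ≠ 0) (h₀ : ∑ S with i ∉ S, c S ≠ 0)
    {s : ι → ℝ} (hs : ∀ j, |s j| ≤ 1) (hsi : s i = 0) :
    ∑ j, s j * influence c i j ≤ 2 / α - 1 := by
  let X : Finset ι → ℝ := fun S ↦ ∑ j ∈ S, s j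
  have hF : ∀ w ∈ strip (α * π / 2), ∀ z, inSector α z →
      z * expSum {S | i ∈ S} c X w + expSum {S | i ∉ S} c X w ≠ 0 := by
    intro w hw z hz
    rw [← sum_mul_prod_update_exp c hsi]
    refine hstable _ ((Function.forall_update_iff _ fun _ ↦ inSector α).2 ⟨hz, fun j _ ↦ ?_⟩)
    have him : |(w * s j).im| ≤ |w.im| := by
      rw [im_mul_ofReal, abs_mul]
      exact mul_le_of_le_one_right (abs_nonneg _) (hs j)
    exact inSector_exp (him.trans_lt hw)
  have hbound := norm_logDeriv_sub_logDeriv_le hα (differentiable_expSum _ _ _).differentiableOn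
    (differentiable_expSum _ _ _).differentiableOn
    (by rwa [expSum_zero, ofReal_ne_zero]) (by rwa [expSum_zero, ofReal_ne_zero]) hF
  rw [norm_sub_rev, logDeriv_expSum_zero, logDeriv_expSum_zero, ← ofReal_sub, norm_real,
    ← sum_mul_influence] at hbound
  exact (Real.le_norm_self _).trans hbound

theorem influence_row_norm_bound_of_sector_stable_general (hα : 0 < α)
    (hstable : ∀ z : ι → ℂ, (∀ j, inSector α (z j)) → ∑ S, (c S : ℂ) * ∏ j ∈ S, z j ≠ 0)
    (h₁ : ∑ S with i ∈ S, c S ≠ 0) (h₀ : ∑ S with i ∉ S, c S ≠ 0) :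
    ∑ j ∈ univ.erase i, |influence c i j| ≤ 2 / α - 1 := by
  let s : ι → ℝ := Function.update (fun j ↦ (SignType.sign (influence c i j) : ℝ)) i 0
  have hs : ∀ j, |s j| ≤ 1 := by
    refine (Function.forall_update_iff _ fun _ r ↦ |r| ≤ 1).2 ⟨by simp, fun j _ ↦ ?_⟩
    cases SignType.sign (influence c i j) <;> simp
  have hsi : s i = 0 := Function.update_self ..
  calc ∑ j ∈ univ.erase i, |influence c i j| = ∑ j ∈ univ.erase i, s j * influence c i j :=
        sum_congr rfl fun j hj ↦ by
          simp only [s, Function.update_of_ne (ne_of_mem_erase hj), sign_mul_self]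
    _ = ∑ j, s j * influence c i j := sum_erase _ (by rw [hsi, zero_mul])
    _ ≤ 2 / α - 1 := sum_mul_influence_le_of_sector_stable hα hstable h₁ h₀ hs hsi

end Influence

/-- Sector-stability implies a `2/α - 1` bound on the ℓ₁-norm of each row of the
signed pairwise influence matrix of the distribution `μ(S) = c S / f(1,…,1)` generated
by the multiaffine polynomial `f = Σ_S c_S z^S`. -/
theorem influence_row_norm_bound_of_sector_stable
    (n : ℕ) (α : ℝ) (hα0 : 0 < α) (hα1 : α ≤ 1)
    (c : Finset (Fin n) → ℝ) (hc : ∀ S, 0 ≤ c S)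
    (hpos : 0 < ∑ S : Finset (Fin n), c S)
    (hstable : ∀ z : Fin n → ℂ, (∀ i, inSector α (z i)) →
      (∑ S : Finset (Fin n), (c S : ℂ) * ∏ i ∈ S, z i) ≠ 0)
    (i : Fin n)
    (hPi0 : 0 < (∑ S ∈ univ.filter (fun S : Finset (Fin n) => i ∈ S), c S) /
      (∑ S : Finset (Fin n), c S))
    (hPi1 : (∑ S ∈ univ.filter (fun S : Finset (Fin n) => i ∈ S), c S) /
      (∑ S : Finset (Fin n), c S) < 1) :
    ∑ j ∈ univ.erase i,
      |(∑ S ∈ univ.filter (fun S : Finset (Fin n) => i ∈ S ∧ j ∈ S), c S) /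
          (∑ S ∈ univ.filter (fun S : Finset (Fin n) => i ∈ S), c S) -
        (∑ S ∈ univ.filter (fun S : Finset (Fin n) => i ∉ S ∧ j ∈ S), c S) /
          (∑ S ∈ univ.filter (fun S : Finset (Fin n) => i ∉ S), c S)|
      ≤ 2 / α - 1 := by
  have hsplit := sum_filter_add_sum_filter_not univ (fun S : Finset (Fin n) => i ∈ S) c
  have h₁ := (div_pos_iff_of_pos_right hpos).1 hPi0
  have h₀ := (div_lt_one hpos).1 hPi1
  exact influence_row_norm_bound_of_sector_stable_general hα0 hstable h₁.ne' (by linarith)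
end

section
/- Let g ∈ ℝ[z₁,…,zₙ] be a Hurwitz-stable polynomial. Let g_e be the sum of the terms of g whose total degree is even, and g_o the sum of the terms whose total degree is odd. Then each of g_e and g_o is either identically 0 or Hurwitz-stable. -/
/-!
Writing `e` and `o` for the even and odd parts of `g`, we have `g(z) = e(z) + o(z)` and
`g(-z) = e(z) - o(z)`. Factoring the restriction of `g` to a complex line shows that
`|g(-z)| ≤ |g(z)|` on the product of right half-planes, where `g` has no zero, so `g(-z) / g(z)` is
a holomorphic function of modulus at most one there. A zero of `e` (or of `o`) is a point where this
quotient equals `-1` (or `1`); by the maximum modulus principle the quotient is then constant, so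
that `e` (or `o`) vanishes identically.
-/

open MvPolynomial

/-- A real polynomial is Hurwitz-stable if it does not vanish when all variables are
assigned complex values with positive real part. -/
def HurwitzStable {n : ℕ} (g : MvPolynomial (Fin n) ℝ) : Prop :=
  ∀ z : Fin n → ℂ, (∀ i, 0 < (z i).re) → MvPolynomial.aeval z g ≠ 0

/-- The sum of the terms of `g` of even total degree. -/
noncomputable def evenPart {n : ℕ} (g : MvPolynomial (Fin n) ℝ) : MvPolynomial (Fin n) ℝ :=
  ∑ d ∈ g.support.filter (fun d => Even (d.sum fun _ e => e)),
    MvPolynomial.monomial d (MvPolynomial.coeff d g)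

/-- The sum of the terms of `g` of odd total degree. -/
noncomputable def oddPart {n : ℕ} (g : MvPolynomial (Fin n) ℝ) : MvPolynomial (Fin n) ℝ :=
  ∑ d ∈ g.support.filter (fun d => Odd (d.sum fun _ e => e)),
    MvPolynomial.monomial d (MvPolynomial.coeff d g)

/-- The product of open right half-planes on which Hurwitz-stable polynomials have no zero. -/
def rightHalfSpace (σ : Type*) : Set (σ → ℂ) :=
  {z | ∀ i, 0 < (z i).re}

section RightHalfSpace

variable {σ : Type*}

theorem isOpen_rightHalfSpace [Finite σ] : IsOpen (rightHalfSpace σ) := by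
  simp only [rightHalfSpace, Set.ofPred_forall]
  exact isOpen_iInter_of_finite fun i =>
    isOpen_lt continuous_const (Complex.continuous_re.comp (continuous_apply i))

theorem convex_rightHalfSpace : Convex ℝ (rightHalfSpace σ) := by
  simpa [rightHalfSpace, Set.pi] using
    convex_pi (s := Set.univ) fun (_ : σ) _ => convex_halfSpace_re_gt 0

theorem eq_zero_of_aeval_eq_zero_on_rightHalfSpace {p : MvPolynomial σ ℝ}
    (hp : ∀ z ∈ rightHalfSpace σ, aeval z p = 0) : p = 0 := by
  refine funext_set (fun _ => Set.Ioi 0) (fun _ => Set.Ioi_infinite 0) fun x hx => ?_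
  have hx_aeval : aeval (fun i => (x i : ℂ)) p = 0 := hp _ fun i => by simpa using hx i trivial
  have hx_cast : aeval (fun i => (x i : ℂ)) p = (eval x p : ℂ) := aeval_algebraMap_apply ℂ x p
  simpa [hx_cast] using hx_aeval

end RightHalfSpace

section ReflectionBound

open ComplexConjugate

theorem norm_neg_conj_sub_le_norm_sub {a s : ℂ} (ha : a.re ≤ 0) (hs : 0 ≤ s.re) :
    ‖-conj s - a‖ ≤ ‖s - a‖ := by
  rw [← sq_le_sq₀ (norm_nonneg _) (norm_nonneg _), Complex.sq_norm, Complex.sq_norm]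
  simp only [Complex.normSq_apply, Complex.sub_re, Complex.sub_im, Complex.neg_re,
    Complex.neg_im, Complex.conj_re, Complex.conj_im]
  linarith [mul_nonpos_of_nonpos_of_nonneg ha hs]

theorem norm_eval_neg_conj_le_norm_eval {p : Polynomial ℂ}
    (hp : ∀ s : ℂ, 0 < s.re → p.eval s ≠ 0) {s : ℂ} (hs : 0 ≤ s.re) :
    ‖p.eval (-conj s)‖ ≤ ‖p.eval s‖ := by
  have norm_eval (t : ℂ) :
      ‖p.eval t‖ = ‖p.leadingCoeff‖ * (p.roots.map fun a => ‖t - a‖).prod := by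
    rw [(IsAlgClosed.splits p).eval_eq_prod_roots, norm_mul, ← normHom_apply (Multiset.prod _),
      map_multiset_prod, Multiset.map_map]
    rfl
  have roots_re_nonpos : ∀ a ∈ p.roots, a.re ≤ 0 := fun a ha =>
    not_lt.1 fun h => hp a h (Polynomial.isRoot_of_mem_roots ha)
  rw [norm_eval, norm_eval]
  gcongr
  exact Multiset.prod_map_le_prod_map₀ _ _ (fun _ _ => norm_nonneg _) fun a ha =>
    norm_neg_conj_sub_le_norm_sub (roots_re_nonpos a ha) hs

variable {σ : Type*}

theorem norm_aeval_neg_conj_le_norm_aeval {R : Type*} [CommSemiring R] [Algebra R ℂ]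
    {g : MvPolynomial σ R} (hg : ∀ z ∈ rightHalfSpace σ, aeval z g ≠ 0) {z : σ → ℂ}
    (hz : z ∈ rightHalfSpace σ) :
    ‖aeval (fun i => -conj (z i)) g‖ ≤ ‖aeval z g‖ := by
  -- The line `s ↦ Re z * s + I * Im z` takes `1` to `z` and `-1` to `-conj z`, and maps the right
  -- half-plane into the right half-space.
  let line : σ → Polynomial ℂ := fun i =>
    Polynomial.C ((z i).re : ℂ) * Polynomial.X + Polynomial.C ((z i).im * Complex.I)
  have eval_line (s : ℂ) :
      (aeval line g).eval s = aeval (fun i => (z i).re * s + (z i).im * Complex.I) g := by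
    simpa [line] using comp_aeval_apply line ((Polynomial.aeval (R := ℂ) s).restrictScalars R) g
  have line_ne_zero (s : ℂ) (hs : 0 < s.re) : (aeval line g).eval s ≠ 0 := by
    rw [eval_line]
    exact hg _ fun i => by simpa using mul_pos (hz i) hs
  have line_one : (fun i => (z i).re * 1 + (z i).im * Complex.I) = z := by
    simp [Complex.re_add_im]
  have line_neg_one :
      (fun i => (z i).re * -conj 1 + (z i).im * Complex.I) = fun i => -conj (z i) := by
    funext i
    apply Complex.ext <;> simp
  have bound := norm_eval_neg_conj_le_norm_eval line_ne_zero (s := 1) zero_le_one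
  rwa [eval_line, eval_line, line_one, line_neg_one] at bound

theorem aeval_conj_eq_conj_aeval (g : MvPolynomial σ ℝ) (z : σ → ℂ) :
    aeval (fun i => conj (z i)) g = conj (aeval z g) :=
  (comp_aeval_apply z Complex.conjAe.toAlgHom g).symm

theorem norm_aeval_neg_le_norm_aeval {g : MvPolynomial σ ℝ}
    (hg : ∀ z ∈ rightHalfSpace σ, aeval z g ≠ 0) {z : σ → ℂ} (hz : z ∈ rightHalfSpace σ) :
    ‖aeval (-z) g‖ ≤ ‖aeval z g‖ :=
  calc ‖aeval (-z) g‖ = ‖aeval (fun i => conj ((-z) i)) g‖ := by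
        rw [aeval_conj_eq_conj_aeval, Complex.norm_conj]
    _ = ‖aeval (fun i => -conj (z i)) g‖ := by simp only [Pi.neg_apply, map_neg]
    _ ≤ ‖aeval z g‖ := norm_aeval_neg_conj_le_norm_aeval hg hz

end ReflectionBound

theorem eqOn_const_mul_of_norm_le {E : Type*} [NormedAddCommGroup E] [NormedSpace ℂ E]
    {U : Set E} {f h : E → ℂ} {c : ℂ} {z₀ : E} (hU : IsPreconnected U) (hU_open : IsOpen U)
    (hf : DifferentiableOn ℂ f U) (hh : DifferentiableOn ℂ h U) (hh_ne : ∀ z ∈ U, h z ≠ 0)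
    (hfh : ∀ z ∈ U, ‖f z‖ ≤ ‖h z‖) (hc : ‖c‖ = 1) (hz₀ : z₀ ∈ U) (hfz₀ : f z₀ = c * h z₀) :
    Set.EqOn f (fun z => c * h z) U := by
  have quotient_z₀ : f z₀ / h z₀ = c := (div_eq_iff (hh_ne z₀ hz₀)).2 hfz₀
  have quotient_differentiable : DifferentiableOn ℂ (fun z => f z / h z) U := by
    simpa only [div_eq_mul_inv] using hf.fun_mul (hh.fun_inv hh_ne)
  have quotient_isMaxOn : IsMaxOn (norm ∘ fun z => f z / h z) U z₀ := fun z hz => by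
    simpa [quotient_z₀, hc] using div_le_one_of_le₀ (hfh z hz) (norm_nonneg _)
  intro z hz
  have quotient_const : f z / h z = f z₀ / h z₀ :=
    Complex.eqOn_of_isPreconnected_of_isMaxOn_norm hU hU_open quotient_differentiable
      hz₀ quotient_isMaxOn hz
  exact (div_eq_iff (hh_ne z hz)).1 (quotient_const.trans quotient_z₀)

theorem aeval_neg_eqOn_const_mul_aeval {σ : Type*} [Finite σ] {g : MvPolynomial σ ℝ}
    (hg : ∀ z ∈ rightHalfSpace σ, aeval z g ≠ 0) {c : ℂ} (hc : ‖c‖ = 1) {z₀ : σ → ℂ}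
    (hz₀ : z₀ ∈ rightHalfSpace σ) (h₀ : aeval (-z₀) g = c * aeval z₀ g) :
    Set.EqOn (fun z => aeval (-z) g) (fun z => c * aeval z g) (rightHalfSpace σ) := by
  cases nonempty_fintype σ
  have differentiable_aeval : Differentiable ℂ fun z : σ → ℂ => aeval z g := fun z =>
    (AnalyticAt.aeval_mvPolynomial (𝕜 := ℂ) (f := fun z : σ → ℂ => z)
      (fun i => (ContinuousLinearMap.proj (R := ℂ) i).analyticAt z) g).differentiableAt
  exact eqOn_const_mul_of_norm_le convex_rightHalfSpace.isPreconnected isOpen_rightHalfSpace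
    (differentiable_aeval.comp differentiable_id.neg).differentiableOn
    differentiable_aeval.differentiableOn hg (fun _ => norm_aeval_neg_le_norm_aeval hg) hc hz₀ h₀

theorem HurwitzStable.eq_zero_or_hurwitzStable {n : ℕ} {g p : MvPolynomial (Fin n) ℝ}
    (hg : HurwitzStable g) {c : ℂ} (hc : ‖c‖ = 1)
    (hp : ∀ z : Fin n → ℂ, aeval z p = 0 ↔ aeval (-z) g = c * aeval z g) :
    p = 0 ∨ HurwitzStable p := by
  refine or_iff_not_imp_right.2 fun h => ?_
  obtain ⟨z₀, hz₀, hpz₀⟩ : ∃ z₀ ∈ rightHalfSpace (Fin n), aeval z₀ p = 0 := by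
    simpa [HurwitzStable, rightHalfSpace] using h
  exact eq_zero_of_aeval_eq_zero_on_rightHalfSpace fun z hz =>
    (hp z).2 (aeval_neg_eqOn_const_mul_aeval hg hc hz₀ ((hp z₀).1 hpz₀) hz)

section Parity

theorem aeval_neg_monomial {σ R A : Type*} [CommSemiring R] [CommRing A] [Algebra R A]
    (d : σ →₀ ℕ) (r : R) (z : σ → A) :
    aeval (-z) (monomial d r) = (-1) ^ (d.sum fun _ e => e) * aeval z (monomial d r) := by
  have prod_neg_pow : (d.prod fun i e => (-z) i ^ e) =
      (-1) ^ (d.sum fun _ e => e) * d.prod fun i e => z i ^ e := by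
    simp only [Finsupp.prod, Finsupp.sum, Pi.neg_apply, neg_pow (z _), Finset.prod_mul_distrib,
      Finset.prod_pow_eq_pow_sum]
  rw [aeval_monomial, aeval_monomial, prod_neg_pow, mul_left_comm]

variable {n : ℕ} (g : MvPolynomial (Fin n) ℝ)

theorem evenPart_add_oddPart : evenPart g + oddPart g = g := by
  simp only [evenPart, oddPart, ← Nat.not_even_iff_odd]
  rw [Finset.sum_filter_add_sum_filter_not, support_sum_monomial_coeff]

variable {A : Type*} [CommRing A] [Algebra ℝ A] (z : Fin n → A)

theorem aeval_neg_evenPart : aeval (-z) (evenPart g) = aeval z (evenPart g) := by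
  rw [evenPart, map_sum, map_sum]
  refine Finset.sum_congr rfl fun d hd => ?_
  rw [aeval_neg_monomial, (Finset.mem_filter.1 hd).2.neg_one_pow, one_mul]

theorem aeval_neg_oddPart : aeval (-z) (oddPart g) = -aeval z (oddPart g) := by
  rw [oddPart, map_sum, map_sum, ← Finset.sum_neg_distrib]
  refine Finset.sum_congr rfl fun d hd => ?_
  rw [aeval_neg_monomial, (Finset.mem_filter.1 hd).2.neg_one_pow, neg_one_mul]

theorem aeval_eq_evenPart_add_oddPart :
    aeval z g = aeval z (evenPart g) + aeval z (oddPart g) := by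
  rw [← map_add, evenPart_add_oddPart]

theorem aeval_neg_eq_evenPart_sub_oddPart :
    aeval (-z) g = aeval z (evenPart g) - aeval z (oddPart g) := by
  rw [aeval_eq_evenPart_add_oddPart, aeval_neg_evenPart, aeval_neg_oddPart, sub_eq_add_neg]

theorem aeval_evenPart_eq_zero_iff :
    aeval z (evenPart g) = 0 ↔ aeval (-z) g = -aeval z g := by
  rw [aeval_neg_eq_evenPart_sub_oddPart, aeval_eq_evenPart_add_oddPart g z]
  constructor <;> intro h
  · linear_combination 2 * h
  · linear_combination (norm := module) (1 / 2 : ℝ) • h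

theorem aeval_oddPart_eq_zero_iff :
    aeval z (oddPart g) = 0 ↔ aeval (-z) g = aeval z g := by
  rw [aeval_neg_eq_evenPart_sub_oddPart, aeval_eq_evenPart_add_oddPart g z]
  constructor <;> intro h
  · linear_combination -2 * h
  · linear_combination (norm := module) (-1 / 2 : ℝ) • h

end Parity

/-- The even and odd parts of a Hurwitz-stable real polynomial are each either
identically zero or Hurwitz-stable. -/
theorem evenPart_oddPart_hurwitzStable {n : ℕ} (g : MvPolynomial (Fin n) ℝ)
    (hg : HurwitzStable g) :
    (evenPart g = 0 ∨ HurwitzStable (evenPart g)) ∧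
      (oddPart g = 0 ∨ HurwitzStable (oddPart g)) := by
  constructor
  · refine hg.eq_zero_or_hurwitzStable (c := -1) (by simp) fun z => ?_
    rw [neg_one_mul, aeval_evenPart_eq_zero_iff]
  · refine hg.eq_zero_or_hurwitzStable (c := 1) (by simp) fun z => ?_
    rw [one_mul, aeval_oddPart_eq_zero_iff]
end

section
/- Let g ∈ ℂ[z₁,…,zₙ] be a nonzero Γ₁-stable (Hurwitz-stable) polynomial with constant parity, i.e., all monomials appearing in g with nonzero coefficient have total degree of the same parity. Let k_max and k_min be the maximum and minimum total degree of monomials of g with nonzero coefficient. Then for every integer k with k_min ≤ k ≤ k_max and k ≡ k_max (mod 2), the degree-k part g_k is Γ_{1/2}-stable. -/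
open MvPolynomial

/-- A complex polynomial is `Γ_α`-stable if it does not vanish when all variables are
assigned values in the open sector of aperture `απ` centered on the positive real axis. -/
def SectorStable {n : ℕ} (α : ℝ) (g : MvPolynomial (Fin n) ℂ) : Prop :=
  ∀ z : Fin n → ℂ, (∀ i, z i ≠ 0 ∧ |(z i).arg| < α * Real.pi / 2) →
    MvPolynomial.eval z g ≠ 0

/-!
Restricting `g` to the line `t ↦ t z` gives a univariate polynomial `p` with coefficients `g_k(z)`.
On the open cone where `g` has no zeros, the lowest and the highest homogeneous components have no
zeros either: they are limits of rescalings of `g`, and a polynomial `p` that is zero-free on the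
unit disc satisfies `|p(x)| ≤ (1 + |x|) ^ deg p * |p(0)|`, so a zero of the limit would spread to a
whole ball. Hence `p` runs exactly from degree `k_min` to degree `k_max`, and by the congruence on
degrees `p = X ^ k_min * q(X ^ m)`. For `z` in the narrower sector, stability makes `q` zero-free on
the closed right half-plane. By the Gauss–Lucas theorem the same holds for its derivatives, whose
values at `0` are, up to factorials, the coefficients of `q`; so none of these vanishes.
-/

open Filter Topology Bornology

section Radial

variable {σ R : Type*} [CommSemiring R]

lemma eval_aeval_polynomial (f : σ → Polynomial R) (g : MvPolynomial σ R) (t : R) :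
    (aeval f g).eval t = eval (fun i => (f i).eval t) g := by
  rw [← Polynomial.coe_evalRingHom, aeval_def, hom_eval₂, eval, coe_eval₂Hom]
  congr 1
  exact RingHom.ext fun _ => Polynomial.eval_C

/-- The restriction `t ↦ g (t z)` of `g` to the line through the origin and `z`, as a univariate
polynomial in `t`. Its coefficients are the values at `z` of the homogeneous components of `g`. -/
noncomputable def radialPolynomial (g : MvPolynomial σ R) (z : σ → R) : Polynomial R :=
  aeval (fun i => Polynomial.C (z i) * Polynomial.X) g

lemma eval_radialPolynomial (g : MvPolynomial σ R) (z : σ → R) (t : R) :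
    (radialPolynomial g z).eval t = eval (t • z) g := by
  rw [radialPolynomial, eval_aeval_polynomial]
  congr 2 with i
  simp only [Polynomial.eval_C_mul, Polynomial.eval_X, Pi.smul_apply, smul_eq_mul]
  exact mul_comm _ _

lemma coeff_radialPolynomial (g : MvPolynomial σ R) (z : σ → R) (k : ℕ) :
    (radialPolynomial g z).coeff k = eval z (homogeneousComponent k g) := by
  have hterm (d : σ →₀ ℕ) : ∏ i ∈ d.support, (Polynomial.C (z i) * Polynomial.X) ^ d i =
      Polynomial.C (∏ i ∈ d.support, z i ^ d i) * Polynomial.X ^ d.degree := by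
    simp only [mul_pow, Finset.prod_mul_distrib, Finset.prod_pow_eq_pow_sum, map_prod, map_pow,
      Finsupp.degree_apply]
  simp only [radialPolynomial, aeval_def, eval₂_eq, Polynomial.algebraMap_eq, hterm, ← mul_assoc,
    ← map_mul, Polynomial.finsetSum_coeff, Polynomial.coeff_C_mul_X_pow,
    homogeneousComponent_apply, map_sum, eval_monomial, Finset.sum_filter, Finsupp.prod,
    apply_ite (eval z), map_zero, eq_comm (a := k)]

lemma coeff_radialPolynomial_eq_zero {g : MvPolynomial σ R} {k : ℕ}
    (hk : ∀ d ∈ g.support, d.degree ≠ k) (z : σ → R) : (radialPolynomial g z).coeff k = 0 := by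
  rw [coeff_radialPolynomial, homogeneousComponent_eq_zero' _ _ hk, map_zero]

lemma homogeneousComponent_degree_ne_zero {g : MvPolynomial σ R} {d : σ →₀ ℕ}
    (hd : d ∈ g.support) : homogeneousComponent d.degree g ≠ 0 := by
  rw [← support_nonempty, support_homogeneousComponent]
  exact ⟨d, by simpa using hd⟩

end Radial

section Asymptotics

variable {𝕜 : Type*} [NormedField 𝕜]

lemma tendsto_inv_pow_mul_eval_nhdsNE {p : Polynomial 𝕜} {a : ℕ} (hp : ∀ i < a, p.coeff i = 0) :
    Tendsto (fun t => (t ^ a)⁻¹ * p.eval t) (𝓝[≠] 0) (𝓝 (p.coeff a)) := by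
  obtain ⟨q, rfl⟩ := Polynomial.X_pow_dvd_iff.mpr hp
  have hq : Tendsto q.eval (𝓝[≠] 0) (𝓝 (q.coeff 0)) := by
    rw [Polynomial.coeff_zero_eq_eval_zero]
    exact q.continuous.continuousWithinAt
  have hcoeff : (Polynomial.X ^ a * q).coeff a = q.coeff 0 := by
    simpa only [zero_add] using Polynomial.coeff_X_pow_mul q a 0
  rw [hcoeff]
  refine hq.congr' ?_
  filter_upwards [self_mem_nhdsWithin] with t (ht : t ≠ 0)
  rw [Polynomial.eval_mul, Polynomial.eval_X_pow, inv_mul_cancel_left₀ (pow_ne_zero a ht)]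

lemma tendsto_inv_pow_mul_eval_cobounded {p : Polynomial 𝕜} {a : ℕ} (hp : p.natDegree ≤ a) :
    Tendsto (fun t => (t ^ a)⁻¹ * p.eval t) (cobounded 𝕜) (𝓝 (p.coeff a)) := by
  have hq : Tendsto (fun t : 𝕜 => (p.reflect a).eval t⁻¹) (cobounded 𝕜) (𝓝 (p.coeff a)) := by
    have h0 : (p.reflect a).eval 0 = p.coeff a := by
      rw [← Polynomial.coeff_zero_eq_eval_zero, Polynomial.coeff_reflect,
        Polynomial.revAt_le a.zero_le, Nat.sub_zero]
    rw [← h0]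
    exact (p.reflect a).continuous.continuousAt.tendsto.comp tendsto_inv₀_cobounded
  refine hq.congr' ?_
  filter_upwards [eventually_ne_cobounded 0] with t ht
  let _ := invertibleOfNonzero ht
  have h := Polynomial.eval₂_reflect_mul_pow (RingHom.id 𝕜) t a p hp
  rw [invOf_eq_inv] at h
  change (p.reflect a).eval t⁻¹ * t ^ a = p.eval t at h
  rw [← h]
  field_simp

end Asymptotics

lemma coeff_ne_zero_of_zero_notMem_convexHull_rootSet {p : Polynomial ℂ} (hp : p ≠ 0)
    (h : (0 : ℂ) ∉ convexHull ℝ (p.rootSet ℂ)) {j : ℕ} (hj : j ≤ p.natDegree) :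
    p.coeff j ≠ 0 := by
  induction j generalizing p with
  | zero =>
    intro h0
    refine h (subset_convexHull ℝ _ ?_)
    rw [Polynomial.mem_rootSet_of_ne hp, Polynomial.coe_aeval_eq_eval,
      ← Polynomial.coeff_zero_eq_eval_zero, h0]
  | succ j ih =>
    have hdeg : 0 < p.degree := Polynomial.natDegree_pos_iff_degree_pos.mp (by lia)
    have hderiv : p.derivative ≠ 0 :=
      fun h0 => by have := Polynomial.derivative_eq_zero.mp h0; lia
    have hhull : convexHull ℝ (p.derivative.rootSet ℂ) ⊆ convexHull ℝ (p.rootSet ℂ) :=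
      convexHull_min (Polynomial.rootSet_derivative_subset_convexHull_rootSet hdeg)
        (convex_convexHull ℝ _)
    have hcoeff := ih hderiv (fun h0 => h (hhull h0)) (by rw [Polynomial.natDegree_derivative]; lia)
    rw [Polynomial.coeff_derivative] at hcoeff
    exact left_ne_zero_of_mul hcoeff

lemma coeff_ne_zero_of_forall_re_nonneg_eval_ne_zero {p : Polynomial ℂ}
    (hp : ∀ s : ℂ, 0 ≤ s.re → p.eval s ≠ 0) {j : ℕ} (hj : j ≤ p.natDegree) : p.coeff j ≠ 0 := by
  have hp0 : p ≠ 0 := by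
    rintro rfl
    simpa using hp 0
  refine coeff_ne_zero_of_zero_notMem_convexHull_rootSet hp0 (fun h0 => ?_) hj
  have hroots : p.rootSet ℂ ⊆ {s : ℂ | s.re < 0} := by
    intro s hs
    rw [Polynomial.mem_rootSet, Polynomial.coe_aeval_eq_eval] at hs
    exact lt_of_not_ge fun hre => hp s hre hs.2
  simpa using convexHull_min hroots (convex_halfSpace_re_lt 0) h0

lemma exists_eq_X_pow_mul_expand {R : Type*} [CommSemiring R] {p : Polynomial R} {a m : ℕ}
    (hm : m ≠ 0) (ha : ∀ i ∈ p.support, a ≤ i) (hmod : ∀ i ∈ p.support, i ≡ a [MOD m]) :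
    ∃ q : Polynomial R, p = Polynomial.X ^ a * Polynomial.expand R m q := by
  obtain ⟨r, rfl⟩ := Polynomial.X_pow_dvd_iff.mpr fun i (hi : i < a) =>
    Polynomial.notMem_support_iff.mp fun h => hi.not_ge (ha i h)
  refine ⟨Polynomial.contract m r, ?_⟩
  congr 1
  ext i
  rw [Polynomial.coeff_expand hm.bot_lt, Polynomial.coeff_contract hm]
  split_ifs with hi
  · rw [Nat.div_mul_cancel hi]
  · by_contra h
    have hmod_i := hmod (i + a) (by simpa [Polynomial.coeff_X_pow_mul] using h)
    exact hi ((Nat.modEq_zero_iff_dvd).mp (Nat.ModEq.add_right_cancel' a (by simpa using hmod_i)))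

lemma exists_pow_eq_and_arg_eq_div {m : ℕ} (hm : m ≠ 0) (s : ℂ) :
    ∃ t : ℂ, t ^ m = s ∧ t.arg = s.arg / m := by
  rcases eq_or_ne s 0 with rfl | hs
  · exact ⟨0, zero_pow hm, by simp⟩
  have hm' : (1 : ℝ) ≤ m := by exact_mod_cast Nat.one_le_iff_ne_zero.mpr hm
  have him : (Complex.log s * (m : ℂ)⁻¹).im = s.arg / m := by
    rw [← Complex.ofReal_natCast, ← Complex.ofReal_inv, Complex.im_mul_ofReal, Complex.log_im,
      div_eq_mul_inv]
  refine ⟨s ^ (m⁻¹ : ℂ), Complex.cpow_nat_inv_pow s hm, ?_⟩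
  rw [Complex.cpow_def_of_ne_zero hs, ← Complex.log_im, Complex.log_exp, him]
  · rw [him, lt_div_iff₀ (by positivity)]
    nlinarith [Complex.neg_pi_lt_arg s, Real.pi_pos]
  · rw [him, div_le_iff₀ (by positivity)]
    nlinarith [Complex.arg_le_pi s, Real.pi_pos]

lemma coeff_ne_zero_of_eval_expand_ne_zero {q : Polynomial ℂ} {m : ℕ} (hm : m ≠ 0)
    (h0 : q.coeff 0 ≠ 0)
    (hq : ∀ t : ℂ, t ≠ 0 → |t.arg| ≤ Real.pi / 2 / m → (Polynomial.expand ℂ m q).eval t ≠ 0)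
    {j : ℕ} (hj : j ≤ q.natDegree) : q.coeff j ≠ 0 := by
  refine coeff_ne_zero_of_forall_re_nonneg_eval_ne_zero (fun s hs => ?_) hj
  rcases eq_or_ne s 0 with rfl | hs0
  · rwa [← Polynomial.coeff_zero_eq_eval_zero]
  obtain ⟨t, rfl, harg⟩ := exists_pow_eq_and_arg_eq_div hm s
  rw [← Polynomial.expand_eval]
  refine hq t (by rintro rfl; exact hs0 (zero_pow hm)) ?_
  rw [harg, abs_div, Nat.abs_cast]
  gcongr
  exact Complex.abs_arg_le_pi_div_two_iff.mpr hs

lemma coeff_ne_zero_of_support_modEq {p : Polynomial ℂ} {m k : ℕ} (hm : m ≠ 0)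
    (hp : ∀ t : ℂ, t ≠ 0 → |t.arg| ≤ Real.pi / 2 / m → p.eval t ≠ 0)
    (hmod : ∀ i ∈ p.support, i ≡ k [MOD m]) (hlow : p.natTrailingDegree ≤ k)
    (hhigh : k ≤ p.natDegree) : p.coeff k ≠ 0 := by
  have hp0 : p ≠ 0 := by
    rintro rfl
    exact hp 1 one_ne_zero (by rw [Complex.arg_one, abs_zero]; positivity) Polynomial.eval_zero
  set a := p.natTrailingDegree
  have hak : a ≡ k [MOD m] := hmod a (Polynomial.natTrailingDegree_mem_support_of_nonzero hp0)
  obtain ⟨q, hq⟩ := exists_eq_X_pow_mul_expand hm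
    (fun i hi => Polynomial.natTrailingDegree_le_of_mem_supp i hi)
    (fun i hi => (hmod i hi).trans hak.symm)
  have hcoeff (i : ℕ) : p.coeff (a + m * i) = q.coeff i := by
    rw [hq, add_comm, Polynomial.coeff_X_pow_mul, Polynomial.coeff_expand_mul' hm.bot_lt]
  have hdeg : p.natDegree = m * q.natDegree + a := by
    rw [hq, Polynomial.natDegree_X_pow_mul _ (right_ne_zero_of_mul (hq ▸ hp0)),
      Polynomial.natDegree_expand, mul_comm]
  have hexpand (t : ℂ) (ht0 : t ≠ 0) (ht : |t.arg| ≤ Real.pi / 2 / m) :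
      (Polynomial.expand ℂ m q).eval t ≠ 0 := by
    have hpt := hp t ht0 ht
    rw [hq, Polynomial.eval_mul] at hpt
    exact right_ne_zero_of_mul hpt
  obtain ⟨j, hj⟩ : m ∣ k - a := (Nat.modEq_iff_dvd' hlow).mp hak
  rw [← Nat.add_sub_of_le hlow, hj, hcoeff]
  refine coeff_ne_zero_of_eval_expand_ne_zero hm ?_ hexpand
    (Nat.le_of_mul_le_mul_left (by lia) hm.bot_lt)
  rw [← hcoeff]
  exact Polynomial.coeff_natTrailingDegree_ne_zero.mpr hp0

lemma norm_eval_le_one_add_norm_pow_mul {p : Polynomial ℂ}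
    (hp : ∀ u : ℂ, ‖u‖ < 1 → p.eval u ≠ 0) (x : ℂ) :
    ‖p.eval x‖ ≤ (1 + ‖x‖) ^ p.natDegree * ‖p.eval 0‖ := by
  have hnorm (y : ℂ) :
      ‖p.eval y‖ = ‖p.leadingCoeff‖ * (p.roots.map fun r => ‖y - r‖).prod := by
    rw [(IsAlgClosed.splits p).eval_eq_prod_roots, norm_mul]
    congr 1
    exact (map_multiset_prod (normHom : ℂ →*₀ ℝ) _).trans (by rw [Multiset.map_map]; rfl)
  have hroot (r : ℂ) (hr : r ∈ p.roots) : ‖x - r‖ ≤ (1 + ‖x‖) * ‖0 - r‖ := by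
    have hr1 : 1 ≤ ‖r‖ := le_of_not_gt fun hlt => hp r hlt (Polynomial.isRoot_of_mem_roots hr)
    rw [zero_sub, norm_neg]
    nlinarith [norm_sub_le x r, norm_nonneg x]
  have hprod : (p.roots.map fun r => ‖x - r‖).prod ≤
      (1 + ‖x‖) ^ p.natDegree * (p.roots.map fun r => ‖0 - r‖).prod := by
    rw [(IsAlgClosed.splits p).natDegree_eq_card_roots, ← Multiset.prod_replicate,
      ← Multiset.map_const', ← Multiset.prod_map_mul]
    exact Multiset.prod_map_le_prod_map₀ _ _ (fun _ _ => norm_nonneg _) hroot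
  rw [hnorm, hnorm, mul_left_comm]
  gcongr

lemma norm_eval_le_two_pow_mul {σ : Type*} {g : MvPolynomial σ ℂ} {z w : σ → ℂ}
    (h : ∀ u : ℂ, ‖u‖ < 1 → eval (z + u • (w - z)) g ≠ 0) :
    ‖eval w g‖ ≤ 2 ^ g.totalDegree * ‖eval z g‖ := by
  let f : Polynomial ℂ :=
    aeval (fun i => Polynomial.C (w i - z i) * Polynomial.X + Polynomial.C (z i)) g
  have hf (u : ℂ) : f.eval u = eval (z + u • (w - z)) g := by
    simp only [f]
    rw [eval_aeval_polynomial]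
    congr 2 with i
    simp only [Polynomial.eval_add, Polynomial.eval_C_mul, Polynomial.eval_X, Polynomial.eval_C,
      Pi.add_apply, Pi.smul_apply, Pi.sub_apply, smul_eq_mul]
    ring
  have hdeg : f.natDegree ≤ g.totalDegree := by
    simpa using aeval_natDegree_le g le_rfl _ (n := 1) fun i => Polynomial.natDegree_linear_le
  have hbound := norm_eval_le_one_add_norm_pow_mul (fun u hu => hf u ▸ h u hu) 1
  rw [hf, hf, norm_one, one_add_one_eq_two, one_smul, zero_smul, add_zero,
    add_sub_cancel] at hbound
  refine hbound.trans ?_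
  gcongr
  exact one_le_two

lemma eq_zero_of_eval_eq_zero_on_ball {σ 𝕜 : Type*} [Fintype σ] [NontriviallyNormedField 𝕜]
    {g : MvPolynomial σ 𝕜} {z : σ → 𝕜} {r : ℝ} (hr : 0 < r)
    (h : ∀ w ∈ Metric.ball z r, eval w g = 0) : g = 0 := by
  refine funext_set (fun i => Metric.ball (z i) r)
    (fun i => infinite_of_mem_nhds (z i) (Metric.ball_mem_nhds _ hr)) fun w hw => ?_
  rw [map_zero]
  exact h w (by rwa [ball_pi z hr])

section Cone

variable {σ : Type*} [Finite σ] {U : Set (σ → ℂ)} {g : MvPolynomial σ ℂ}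

lemma eval_ne_zero_of_tendsto_mul_eval_smul {p : MvPolynomial σ ℂ} {c : ℂ → ℂ} {l : Filter ℂ}
    [l.NeBot] (hU : IsOpen U) (hg : ∀ z ∈ U, eval z g ≠ 0) (hp : p ≠ 0)
    (hl : ∀ᶠ t in l, ∀ z ∈ U, t • z ∈ U)
    (hlim : ∀ z ∈ U, Tendsto (fun t => c t * eval (t • z) g) l (𝓝 (eval z p))) :
    ∀ z ∈ U, eval z p ≠ 0 := by
  have := Fintype.ofFinite σ
  intro z hz hpz
  obtain ⟨r, hr, hball⟩ := Metric.isOpen_iff.mp hU z hz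
  refine hp (eq_zero_of_eval_eq_zero_on_ball (z := z) hr fun w hw => ?_)
  have hseg (u : ℂ) (hu : ‖u‖ < 1) : z + u • (w - z) ∈ U := by
    refine hball ?_
    rw [mem_ball_iff_norm, add_sub_cancel_left, norm_smul]
    exact (mul_le_of_le_one_left (norm_nonneg _) hu.le).trans_lt (mem_ball_iff_norm.mp hw)
  have hbound : ∀ᶠ t in l,
      ‖c t * eval (t • w) g‖ ≤ 2 ^ g.totalDegree * ‖c t * eval (t • z) g‖ := by
    filter_upwards [hl] with t ht
    rw [norm_mul, norm_mul, mul_left_comm]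
    gcongr
    refine norm_eval_le_two_pow_mul fun u hu => ?_
    rw [← smul_sub, smul_comm u t, ← smul_add]
    exact hg _ (ht _ (hseg u hu))
  have hle := le_of_tendsto_of_tendsto (hlim w (hball hw)).norm
    ((hlim z hz).norm.const_mul _) hbound
  rwa [hpz, norm_zero, mul_zero, norm_le_zero_iff] at hle

lemma eval_homogeneousComponent_ne_zero_of_forall_ge
    (hU : IsOpen U) (hcone : ∀ t : ℝ, 0 < t → ∀ z ∈ U, (t : ℂ) • z ∈ U)
    (hg : ∀ z ∈ U, eval z g ≠ 0) {d : σ →₀ ℕ} (hd : d ∈ g.support)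
    (hmin : ∀ e ∈ g.support, d.degree ≤ e.degree) :
    ∀ z ∈ U, eval z (homogeneousComponent d.degree g) ≠ 0 := by
  have hreal : map ((↑) : ℝ → ℂ) (𝓝[>] 0) ≤ 𝓝[≠] 0 := by
    refine tendsto_nhdsWithin_iff.mpr ⟨?_, ?_⟩
    · exact Complex.continuous_ofReal.tendsto' 0 0 Complex.ofReal_zero |>.mono_left
        nhdsWithin_le_nhds
    · filter_upwards [self_mem_nhdsWithin] with t ht
      simpa using ht.ne'
  refine eval_ne_zero_of_tendsto_mul_eval_smul (l := map ((↑) : ℝ → ℂ) (𝓝[>] 0))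
    (c := fun t => (t ^ d.degree)⁻¹) hU hg
    (homogeneousComponent_degree_ne_zero hd) ?_ fun z _ => ?_
  · exact eventually_map.mpr (by filter_upwards [self_mem_nhdsWithin] using hcone)
  · have hlow (i : ℕ) (hi : i < d.degree) : (radialPolynomial g z).coeff i = 0 :=
      coeff_radialPolynomial_eq_zero (fun e he => (hi.trans_le (hmin e he)).ne') z
    simpa only [eval_radialPolynomial, coeff_radialPolynomial] using
      (tendsto_inv_pow_mul_eval_nhdsNE hlow).mono_left hreal

lemma eval_homogeneousComponent_ne_zero_of_forall_le
    (hU : IsOpen U) (hcone : ∀ t : ℝ, 0 < t → ∀ z ∈ U, (t : ℂ) • z ∈ U)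
    (hg : ∀ z ∈ U, eval z g ≠ 0) {d : σ →₀ ℕ} (hd : d ∈ g.support)
    (hmax : ∀ e ∈ g.support, e.degree ≤ d.degree) :
    ∀ z ∈ U, eval z (homogeneousComponent d.degree g) ≠ 0 := by
  refine eval_ne_zero_of_tendsto_mul_eval_smul (l := map ((↑) : ℝ → ℂ) atTop)
    (c := fun t => (t ^ d.degree)⁻¹) hU hg
    (homogeneousComponent_degree_ne_zero hd) ?_ fun z _ => ?_
  · exact eventually_map.mpr (by filter_upwards [eventually_gt_atTop 0] using hcone)
  · have hdeg : (radialPolynomial g z).natDegree ≤ d.degree :=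
      Polynomial.natDegree_le_iff_coeff_eq_zero.mpr fun i hi =>
        coeff_radialPolynomial_eq_zero (fun e he => ((hmax e he).trans_lt hi).ne) z
    have hreal : map ((↑) : ℝ → ℂ) atTop ≤ cobounded ℂ :=
      RCLike.tendsto_ofReal_atTop_cobounded ℂ
    simpa only [eval_radialPolynomial, coeff_radialPolynomial] using
      (tendsto_inv_pow_mul_eval_cobounded hdeg).mono_left hreal

end Cone

/-- The open sector `Γ_α`, written with `Complex.arg` as in `SectorStable`; it is all of `ℂ ∖ {0}`
when `α > 2`. -/
def sector (α : ℝ) : Set ℂ := {z | z ≠ 0 ∧ |z.arg| < α * Real.pi / 2}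

lemma isOpen_sector (α : ℝ) : IsOpen (sector α) := by
  refine isOpen_iff_mem_nhds.mpr fun z hz => ?_
  have hcont : ContinuousAt (fun w : ℂ => InnerProductGeometry.angle 1 w) z :=
    (InnerProductGeometry.continuousAt_angle (x := (1, z)) one_ne_zero hz.1).comp
      (f := fun w : ℂ => ((1 : ℂ), w)) (by fun_prop)
  have hangle : InnerProductGeometry.angle 1 z < α * Real.pi / 2 := by
    rw [Complex.angle_one_left hz.1]
    exact hz.2
  filter_upwards [isOpen_ne.mem_nhds hz.1, hcont.eventually_lt_const hangle] with w hw0 hw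
  exact ⟨hw0, by rwa [← Complex.angle_one_left hw0]⟩

lemma real_mul_mem_sector {α t : ℝ} {z : ℂ} (ht : 0 < t) (hz : z ∈ sector α) :
    (t : ℂ) * z ∈ sector α :=
  ⟨mul_ne_zero (Complex.ofReal_ne_zero.mpr ht.ne') hz.1, by
    rw [Complex.arg_real_mul z ht]
    exact hz.2⟩

lemma mul_mem_sector_add {α β : ℝ} {t z : ℂ} (ht0 : t ≠ 0) (ht : |t.arg| ≤ β * Real.pi / 2)
    (hz : z ∈ sector α) : t * z ∈ sector (α + β) := by
  have harg : |(t * z).arg| ≤ |t.arg| + |z.arg| := by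
    rw [← Complex.angle_one_left (mul_ne_zero ht0 hz.1), ← Complex.angle_one_left ht0,
      ← Complex.angle_one_left hz.1, ← Complex.angle_mul_left ht0 1 z, mul_one]
    exact InnerProductGeometry.angle_le_angle_add_angle 1 t (t * z)
  refine ⟨mul_ne_zero ht0 hz.1, harg.trans_lt ?_⟩
  linarith [hz.2]

theorem homogeneousComponent_sectorStable_of_hurwitz_constant_parity_general
    {n m k : ℕ} {α : ℝ} {g : MvPolynomial (Fin n) ℂ} (hm : m ≠ 0) (hstable : SectorStable α g)
    (hmod : ∀ d ∈ g.support, d.degree ≡ k [MOD m])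
    (hlow : ∃ d ∈ g.support, d.degree ≤ k) (hhigh : ∃ d ∈ g.support, k ≤ d.degree) :
    SectorStable (α - 1 / m) (homogeneousComponent k g) := by
  intro z hz
  set U : Set (Fin n → ℂ) := Set.univ.pi fun _ => sector α
  have hU : IsOpen U := isOpen_set_pi Set.finite_univ fun _ _ => isOpen_sector α
  have hcone : ∀ t : ℝ, 0 < t → ∀ w ∈ U, (t : ℂ) • w ∈ U :=
    fun t ht w hw i hi => real_mul_mem_sector ht (hw i hi)
  have hgU : ∀ w ∈ U, eval w g ≠ 0 := fun w hw => hstable w fun i => hw i trivial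
  have hrot (t : ℂ) (ht0 : t ≠ 0) (ht : |t.arg| ≤ Real.pi / 2 / m) : t • z ∈ U := by
    intro i _
    have := mul_mem_sector_add (β := 1 / m) ht0 (ht.trans_eq (by ring)) (hz i)
    rwa [sub_add_cancel] at this
  have hzU : z ∈ U := by
    rw [← one_smul ℂ z]
    exact hrot 1 one_ne_zero (by rw [Complex.arg_one, abs_zero]; positivity)
  obtain ⟨e, he, hek⟩ := hlow
  obtain ⟨f, hf, hkf⟩ := hhigh
  obtain ⟨dmin, hdmin, hmin⟩ := g.support.exists_min_image Finsupp.degree ⟨e, he⟩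
  obtain ⟨dmax, hdmax, hmax⟩ := g.support.exists_max_image Finsupp.degree ⟨e, he⟩
  rw [← coeff_radialPolynomial]
  refine coeff_ne_zero_of_support_modEq hm (fun t ht0 ht => ?_) (fun i hi => ?_) ?_ ?_
  · rw [eval_radialPolynomial]
    exact hgU _ (hrot t ht0 ht)
  · by_contra hik
    refine Polynomial.mem_support_iff.mp hi (coeff_radialPolynomial_eq_zero ?_ z)
    rintro d hd rfl
    exact hik (hmod d hd)
  · refine (Polynomial.natTrailingDegree_le_of_ne_zero ?_).trans ((hmin e he).trans hek)
    rw [coeff_radialPolynomial]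
    exact eval_homogeneousComponent_ne_zero_of_forall_ge hU hcone hgU hdmin hmin z hzU
  · refine (hkf.trans (hmax f hf)).trans (Polynomial.le_natDegree_of_ne_zero ?_)
    rw [coeff_radialPolynomial]
    exact eval_homogeneousComponent_ne_zero_of_forall_le hU hcone hgU hdmax hmax z hzU

/-- If `g` is a nonzero Hurwitz-stable (`Γ₁`-stable) polynomial all of whose monomials
have total degree of the same parity, then for any `k` between the minimal and maximal
total degree with `k ≡ k_max (mod 2)`, the degree-`k` part of `g` is `Γ_{1/2}`-stable. -/
theorem homogeneousComponent_sectorStable_of_hurwitz_constant_parity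
    {n : ℕ} (g : MvPolynomial (Fin n) ℂ) (hg : g ≠ 0)
    (hstable : SectorStable 1 g)
    (hparity : ∀ d ∈ g.support, ∀ d' ∈ g.support,
      (d.sum fun _ e => e) % 2 = (d'.sum fun _ e => e) % 2)
    (kmin kmax : ℕ)
    (hkmaxmem : ∃ d ∈ g.support, (d.sum fun _ e => e) = kmax)
    (hkmaxub : ∀ d ∈ g.support, (d.sum fun _ e => e) ≤ kmax)
    (hkminmem : ∃ d ∈ g.support, (d.sum fun _ e => e) = kmin)
    (hkminlb : ∀ d ∈ g.support, kmin ≤ (d.sum fun _ e => e))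
    (k : ℕ) (hk1 : kmin ≤ k) (hk2 : k ≤ kmax) (hk3 : k % 2 = kmax % 2) :
    SectorStable (1 / 2) (MvPolynomial.homogeneousComponent k g) := by
  obtain ⟨dmax, hdmax, rfl⟩ := hkmaxmem
  obtain ⟨dmin, hdmin, rfl⟩ := hkminmem
  have h := homogeneousComponent_sectorStable_of_hurwitz_constant_parity_general two_ne_zero hstable
    (fun d hd => (hparity d hd dmax hdmax).trans hk3.symm) ⟨dmin, hdmin, hk1⟩ ⟨dmax, hdmax, hk2⟩
  convert h using 1
  norm_num
end

section
/- Let A ∈ ℝ^{n×n} be a matrix such that A + Aᵀ is positive semidefinite. Define f(z₁,…,zₙ) = Σ_{S ⊆ [n]} det(A_{S,S}) · Π_{i ∉ S} z_i, where A_{S,S} is the principal submatrix of A indexed by S (with det of the empty matrix equal to 1). Then f has nonnegative coefficients, and f is either identically 0 or Hurwitz-stable. -/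
open Finset Matrix

/-- The determinant of the principal submatrix `A_{S,S}` (with `det(A_{∅,∅}) = 1`). -/
noncomputable def principalMinor {n : ℕ} (A : Matrix (Fin n) (Fin n) ℝ)
    (S : Finset (Fin n)) : ℝ :=
  (A.submatrix (fun x : {i // i ∈ S} => (x : Fin n)) (fun x : {i // i ∈ S} => (x : Fin n))).det

/-- The polynomial `f(z) = Σ_{S ⊆ [n]} det(A_{S,S}) Π_{i ∉ S} z_i`, as a function on `ℂⁿ`. -/
noncomputable def minorPoly {n : ℕ} (A : Matrix (Fin n) (Fin n) ℝ) (z : Fin n → ℂ) : ℂ :=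
  ∑ S : Finset (Fin n), (principalMinor A S : ℂ) * ∏ i ∈ Sᶜ, z i

/-!
Multilinearity of the determinant in the rows identifies `f z` with `det (A + diagonal z)`.
If `M + Mᴴ` is positive definite, then `M` is invertible: `M *ᵥ v = 0` forces
`star v ⬝ᵥ (M + Mᴴ) *ᵥ v = 0`. This applies to `M = A + diagonal z` when all `Re (z i) > 0`, which
gives stability. Over `ℝ` the matrices with `M + Mᵀ` positive definite form a convex set containing
`1` on which `det` does not vanish, so `det` is positive there; the principal minors of `A` are
limits of such determinants.
-/

section CommRing

variable {ι R : Type*} [Fintype ι] [DecidableEq ι] [CommRing R]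

lemma det_piecewise_diagonal (A : Matrix ι ι R) (z : ι → R) (S : Finset ι) :
    (of (S.piecewise A.row (diagonal z).row)).det =
      (A.submatrix (↑) (↑) : Matrix S S R).det * ∏ i ∈ Sᶜ, z i := by
  have rows_eq : S.piecewise A.row (diagonal z).row =
      Sᶜ.piecewise (fun i ↦ z i • S.piecewise A.row (1 : Matrix ι ι R).row i)
        (S.piecewise A.row (1 : Matrix ι ι R).row) := by
    ext i j
    by_cases hi : i ∈ S <;> simp [hi, diagonal_apply, one_apply]
  calc (of (S.piecewise A.row (diagonal z).row)).det
    _ = (∏ i ∈ Sᶜ, z i) • (of (S.piecewise A.row (1 : Matrix ι ι R).row)).det := by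
      rw [rows_eq]
      exact detRowAlternating.toMultilinearMap.map_piecewise_smul z _ Sᶜ
    _ = (A.submatrix (↑) (↑) : Matrix S S R).det * ∏ i ∈ Sᶜ, z i := by
      rw [det_piecewise_one_eq_submatrix_det, smul_eq_mul, mul_comm]

lemma det_add_diagonal_eq_sum_submatrix_det (A : Matrix ι ι R) (z : ι → R) :
    (A + diagonal z).det =
      ∑ S : Finset ι, (A.submatrix (↑) (↑) : Matrix S S R).det * ∏ i ∈ Sᶜ, z i := by
  calc (A + diagonal z).det
    _ = ∑ S : Finset ι, (of (S.piecewise A.row (diagonal z).row)).det :=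
      detRowAlternating.map_add_univ A.row (diagonal z).row
    _ = ∑ S : Finset ι, (A.submatrix (↑) (↑) : Matrix S S R).det * ∏ i ∈ Sᶜ, z i :=
      sum_congr rfl fun S _ ↦ det_piecewise_diagonal A z S

end CommRing

section HermitianPart

variable {ι R : Type*} [DecidableEq ι]

lemma det_ne_zero_of_posDef_add_conjTranspose [Fintype ι] [CommRing R] [IsDomain R]
    [PartialOrder R] [StarRing R] {M : Matrix ι ι R} (hM : (M + Mᴴ).PosDef) : M.det ≠ 0 := by
  intro hdet
  obtain ⟨v, hv, hMv⟩ := exists_mulVec_eq_zero_iff.mpr hdet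
  have quad_eq_zero : star v ⬝ᵥ (M + Mᴴ) *ᵥ v = 0 := by
    rw [add_mulVec, dotProduct_add, dotProduct_mulVec _ Mᴴ, ← star_mulVec, hMv, star_zero,
      dotProduct_zero, zero_dotProduct, add_zero]
  exact (hM.dotProduct_mulVec_pos hv).ne' quad_eq_zero

lemma posDef_add_diagonal_add_conjTranspose [Ring R] [NoZeroDivisors R] [PartialOrder R]
    [StarRing R] [StarOrderedRing R] {A : Matrix ι ι R} (hA : (A + Aᴴ).PosSemidef) {z : ι → R}
    (hz : ∀ i, 0 < z i + star (z i)) :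
    (A + diagonal z + (A + diagonal z)ᴴ).PosDef := by
  have hdiag : (diagonal z + (diagonal z)ᴴ).PosDef := by
    rw [diagonal_conjTranspose, diagonal_add]
    exact .diagonal hz
  rw [conjTranspose_add, add_add_add_comm]
  exact hdiag.posSemidef_add hA

end HermitianPart

section RCLike

open scoped ComplexOrder MatrixOrder

variable {ι 𝕜 : Type*} [RCLike 𝕜]

lemma posSemidef_map_algebraMap [Finite ι] {B : Matrix ι ι ℝ} (hB : B.PosSemidef) :
    (B.map (algebraMap ℝ 𝕜)).PosSemidef := by
  classical
  have := Fintype.ofFinite ι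
  obtain ⟨C, rfl⟩ := CStarAlgebra.nonneg_iff_eq_star_mul_self.mp hB.nonneg
  have map_star_mul_self : (star C * C).map (algebraMap ℝ 𝕜) =
      (C.map (algebraMap ℝ 𝕜))ᴴ * C.map (algebraMap ℝ 𝕜) := by
    rw [Matrix.map_mul, star_eq_conjTranspose, conjTranspose_map]
    exact fun x ↦ (RCLike.conj_ofReal x).symm
  rw [map_star_mul_self]
  exact posSemidef_conjTranspose_mul_self _

lemma posSemidef_map_add_conjTranspose_map [Finite ι] {A : Matrix ι ι ℝ}
    (hA : (A + Aᵀ).PosSemidef) :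
    (A.map (algebraMap ℝ 𝕜) + (A.map (algebraMap ℝ 𝕜))ᴴ).PosSemidef := by
  have map_add_transpose : (A + Aᵀ).map (algebraMap ℝ 𝕜) =
      A.map (algebraMap ℝ 𝕜) + (A.map (algebraMap ℝ 𝕜))ᴴ := by
    ext i j
    simp
  exact map_add_transpose ▸ posSemidef_map_algebraMap hA

lemma det_add_diagonal_ne_zero [Fintype ι] [DecidableEq ι] {A : Matrix ι ι 𝕜}
    (hA : (A + Aᴴ).PosSemidef) {z : ι → 𝕜} (hz : ∀ i, 0 < RCLike.re (z i)) :
    (A + diagonal z).det ≠ 0 := by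
  refine det_ne_zero_of_posDef_add_conjTranspose
    (posDef_add_diagonal_add_conjTranspose hA fun i ↦ ?_)
  rw [← starRingEnd_apply, RCLike.add_conj]
  exact mul_pos two_pos (RCLike.ofReal_pos.mpr (hz i))

end RCLike

section Real

variable {ι : Type*}

lemma convex_setOf_posDef_add_transpose :
    Convex ℝ {M : Matrix ι ι ℝ | (M + Mᵀ).PosDef} := by
  refine convex_iff_forall_pos.mpr fun M hM N hN a b ha hb _ ↦ ?_
  have hcomb : a • M + b • N + (a • M + b • N)ᵀ = a • (M + Mᵀ) + b • (N + Nᵀ) := by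
    rw [transpose_add, transpose_smul, transpose_smul, smul_add, smul_add, add_add_add_comm]
  simpa only [Set.mem_ofPred_eq, hcomb] using (hM.smul ha).add (hN.smul hb)

variable [Fintype ι] [DecidableEq ι]

lemma det_pos_of_posDef_add_transpose {M : Matrix ι ι ℝ} (hM : (M + Mᵀ).PosDef) :
    0 < M.det := by
  by_contra! hdet
  have one_mem : (1 + 1ᵀ : Matrix ι ι ℝ).PosDef := by
    rw [transpose_one]
    exact PosDef.one.add PosDef.one
  obtain ⟨N, hN, hNdet⟩ := convex_setOf_posDef_add_transpose.isPreconnected.intermediate_value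
    hM one_mem continuous_id.matrix_det.continuousOn
    (show (0 : ℝ) ∈ Set.Icc M.det (1 : Matrix ι ι ℝ).det from ⟨hdet, by simp⟩)
  exact det_ne_zero_of_posDef_add_conjTranspose hN hNdet

lemma det_nonneg_of_posSemidef_add_transpose {A : Matrix ι ι ℝ} (hA : (A + Aᵀ).PosSemidef) :
    0 ≤ A.det := by
  have hcont : Continuous fun t : ℝ ↦ (A + diagonal fun _ ↦ t).det := by fun_prop
  have hlim : Filter.Tendsto (fun t : ℝ ↦ (A + diagonal fun _ ↦ t).det)
      (nhdsWithin 0 (Set.Ioi 0)) (nhds A.det) := by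
    simpa using (hcont.tendsto 0).mono_left nhdsWithin_le_nhds
  refine ge_of_tendsto hlim ?_
  filter_upwards [self_mem_nhdsWithin] with t ht
  exact (det_pos_of_posDef_add_transpose
    (posDef_add_diagonal_add_conjTranspose hA fun _ ↦ add_pos ht ht)).le

end Real

theorem minorPoly_nonneg_and_hurwitzStable_general {ι : Type*} [Fintype ι] [DecidableEq ι]
    (A : Matrix ι ι ℝ) (hA : (A + Aᵀ).PosSemidef) :
    (∀ S : Finset ι, 0 ≤ (A.submatrix (↑) (↑) : Matrix S S ℝ).det) ∧
      ∀ z : ι → ℂ, (∀ i, 0 < (z i).re) →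
        ∑ S : Finset ι, ((A.submatrix (↑) (↑) : Matrix S S ℝ).det : ℂ) * ∏ i ∈ Sᶜ, z i ≠ 0 := by
  refine ⟨fun S ↦ det_nonneg_of_posSemidef_add_transpose (hA.submatrix _), fun z hz ↦ ?_⟩
  have map_minor (S : Finset ι) : ((A.submatrix (↑) (↑) : Matrix S S ℝ).det : ℂ) =
      ((A.map (algebraMap ℝ ℂ)).submatrix (↑) (↑) : Matrix S S ℂ).det :=
    (algebraMap ℝ ℂ).map_det _
  simp_rw [map_minor, ← det_add_diagonal_eq_sum_submatrix_det]
  exact det_add_diagonal_ne_zero (posSemidef_map_add_conjTranspose_map hA) hz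

/-- If `A + Aᵀ` is positive semidefinite, then `f(z) = Σ_S det(A_{S,S}) z^{[n]∖S}` has
nonnegative coefficients and is either identically zero or Hurwitz-stable. -/
theorem minorPoly_nonneg_and_hurwitzStable {n : ℕ} (A : Matrix (Fin n) (Fin n) ℝ)
    (hA : (A + Aᵀ).PosSemidef) :
    (∀ S : Finset (Fin n), 0 ≤ principalMinor A S) ∧
      ((∀ z : Fin n → ℂ, minorPoly A z = 0) ∨
        (∀ z : Fin n → ℂ, (∀ i, 0 < (z i).re) → minorPoly A z ≠ 0)) := by
  obtain ⟨hminor, hstable⟩ := minorPoly_nonneg_and_hurwitzStable_general A hA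
  exact ⟨hminor, .inr hstable⟩
end

section
/- Let g ∈ ℂ[z₁,…,zₙ] be a homogeneous Γ₁-stable polynomial. Let T₁,…,T_k be a partition of [n] and (c₁,…,c_k) ∈ ℤ_{≥0}^k. Define the (T₁,…,T_k)-degree of a monomial z₁^{t₁}⋯zₙ^{tₙ} as (Σ_{i∈T₁} t_i, …, Σ_{i∈T_k} t_i), and let h be the sum of the terms of g whose (T₁,…,T_k)-degree equals (c₁,…,c_k). Then h is either identically zero or Γ_{1/2^k}-stable. -/
open MvPolynomial Finset

/-!
By Hurwitz's theorem the constant term of a family of Hurwitz-stable polynomials in `y` is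
either zero or nowhere zero; passing to the reversed polynomial, so is the leading coefficient.
Hence the degree in `y` is constant, Gauss–Lucas makes the derivative in `y` Hurwitz-stable, and
every coefficient is either zero or nowhere zero.

Write `z i = exp (x i)`, so that the arguments become the imaginary parts of the `x i`. By
homogeneity `g` does not vanish when all of these lie in a window of width `π` with arbitrary
centre. Multiplying the variables of one block by `y` with `Re y > 0` moves their arguments by some
`t`, `|t| < π / 2`. Because the centre of the common window may follow a fraction `ε` of this
motion, the polynomial stays nonzero if the window of the block has width `(1 - ε) * π` less, and
that of the other variables `ε * π` less. After the coefficient of a power of `y` is extracted, the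
centre of the block no longer matters. Taking `ε = β, 2 * β, 4 * β, …` for the successive blocks
leaves each of them a window of width `β * π`, and with `β = 1 / 2 ^ k` all `k` blocks fit.
-/

open Filter Metric Topology
open scoped Polynomial

section Hurwitz

theorem le_norm_of_forall_mem_frontier_le_norm {E : Type*} [NormedAddCommGroup E]
    [NormedSpace ℂ E] [Nontrivial E] {f : E → ℂ} {U : Set E}
    (hU : Bornology.IsBounded U) (hd : DiffContOnCl ℂ f U) (hf : ∀ z ∈ closure U, f z ≠ 0) {C : ℝ}
    (hC : ∀ z ∈ frontier U, C ≤ ‖f z‖) {z : E} (hz : z ∈ closure U) : C ≤ ‖f z‖ := by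
  rcases le_or_gt C 0 with hC₀ | hC₀
  · exact hC₀.trans (norm_nonneg _)
  have hinv : ‖(f z)⁻¹‖ ≤ C⁻¹ :=
    Complex.norm_le_of_forall_mem_frontier_norm_le hU (hd.inv hf)
      (fun w hw => by simpa using inv_anti₀ hC₀ (hC w hw)) hz
  rw [norm_inv] at hinv
  exact (inv_le_inv₀ (norm_pos_iff.2 (hf z hz)) hC₀).1 hinv

theorem hurwitz_ne_zero {ι : Type*} {l : Filter ι} {F : ι → ℂ → ℂ} {f : ℂ → ℂ} {U : Set ℂ}
    {z₀ : ℂ} (hU : IsOpen U) (hz₀ : z₀ ∈ U) (hlim : TendstoLocallyUniformlyOn F f l U)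
    (hd : ∀ᶠ i in l, DifferentiableOn ℂ (F i) U) (hF : ∃ᶠ i in l, ∀ z ∈ U, F i z ≠ 0)
    (hf : ∀ᶠ z in 𝓝[≠] z₀, f z ≠ 0) : f z₀ ≠ 0 := by
  intro hzero
  have hcont : ContinuousOn f U :=
    hlim.continuousOn ((hF.and_eventually hd).mono fun i hi => hi.2.continuousOn)
  obtain ⟨r, hr, hball⟩ := nhds_basis_closedBall.eventually_iff.1
    ((eventually_nhdsWithin_iff.1 hf).and (hU.mem_nhds hz₀))
  have hsub : closedBall z₀ r ⊆ U := fun z hz => (hball hz).2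
  have hsphere : sphere z₀ r ⊆ closedBall z₀ r := sphere_subset_closedBall
  obtain ⟨w, hw, hmin⟩ := (isCompact_sphere z₀ r).exists_isMinOn
    (NormedSpace.sphere_nonempty.2 hr.le) (hcont.norm.mono (hsphere.trans hsub))
  have hδ : 0 < ‖f w‖ :=
    norm_pos_iff.2 ((hball (hsphere hw)).1 (ne_of_mem_sphere hw hr.ne'))
  have hunif : TendstoUniformlyOn F f l (closedBall z₀ r) :=
    (tendstoLocallyUniformlyOn_iff_forall_isCompact hU).1 hlim _ hsub (isCompact_closedBall z₀ r)
  obtain ⟨i, hi_ne, hi_diff, hi_close⟩ := (hF.and_eventually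
    (hd.and (tendstoUniformlyOn_iff.1 hunif (‖f w‖ / 2) (half_pos hδ)))).exists
  have hcl : closure (ball z₀ r) = closedBall z₀ r := closure_ball z₀ hr.ne'
  have hlower : ‖f w‖ / 2 ≤ ‖F i z₀‖ := by
    refine le_norm_of_forall_mem_frontier_le_norm isBounded_ball
      (hi_diff.mono (hcl.trans_subset hsub)).diffContOnCl
      (fun z hz => hi_ne z (hsub (hcl ▸ hz))) (fun z hz => ?_)
      (subset_closure (mem_ball_self hr))
    rw [frontier_ball z₀ hr.ne'] at hz
    have hfz : ‖f w‖ ≤ ‖f z‖ := hmin hz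
    have hclose : ‖f z - F i z‖ < ‖f w‖ / 2 := by
      simpa [dist_eq_norm] using hi_close z (hsphere hz)
    linarith [norm_le_insert (F i z) (f z), norm_sub_rev (f z) (F i z)]
  have hupper : ‖F i z₀‖ < ‖f w‖ / 2 := by
    simpa [hzero] using hi_close z₀ (mem_closedBall_self hr.le)
  exact hlower.not_gt hupper

theorem hurwitz_ne_zero_of_mem_closure {X E : Type*} [TopologicalSpace X] [AddCommGroup E]
    [Module ℂ E] [TopologicalSpace E] [ContinuousAdd E] [ContinuousSMul ℂ E] {F : X → E → ℂ}
    {A : Set X} {x₀ : X} {U : Set E} {z₀ : E} (hx₀ : x₀ ∈ closure A) (hU : IsOpen U) (hz₀ : z₀ ∈ U)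
    (hcont : Continuous (Function.uncurry F))
    (hd : ∀ x z w, Differentiable ℂ fun s : ℂ => F x (z + s • w))
    (hF : ∀ x ∈ A, ∀ z ∈ U, F x z ≠ 0) (hne : ∃ z, F x₀ z ≠ 0) : F x₀ z₀ ≠ 0 := by
  obtain ⟨z₁, hz₁⟩ := hne
  let L : ℂ → E := fun s => z₀ + s • (z₁ - z₀)
  have hL : Continuous L := by fun_prop
  have hdL (x : X) : Differentiable ℂ (F x ∘ L) := hd x z₀ (z₁ - z₀)
  have hlim : TendstoLocallyUniformly (fun x => F x ∘ L) (F x₀ ∘ L) (𝓝[A] x₀) := by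
    let G : C(X × ℂ, ℂ) := ⟨fun p => F p.1 (L p.2), hcont.comp (continuous_id.prodMap hL)⟩
    exact ContinuousMap.tendsto_iff_tendstoLocallyUniformly.1
      (G.curry.continuous.continuousWithinAt (s := A) (x := x₀))
  have hisolated : ∀ᶠ s in 𝓝[≠] (0 : ℂ), (F x₀ ∘ L) s ≠ 0 := by
    have han : AnalyticOnNhd ℂ (F x₀ ∘ L) Set.univ :=
      Complex.analyticOnNhd_univ_iff_differentiable.2 (hdL x₀)
    refine (han 0 trivial).eventually_eq_zero_or_eventually_ne_zero.resolve_left fun h => hz₁ ?_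
    simpa [L] using han.eqOn_zero_of_preconnected_of_eventuallyEq_zero isPreconnected_univ
      (Set.mem_univ 0) h (Set.mem_univ 1)
  have := mem_closure_iff_nhdsWithin_neBot.1 hx₀
  have h₀ : (F x₀ ∘ L) 0 ≠ 0 :=
    hurwitz_ne_zero (hU.preimage hL) (by simpa [L] using hz₀) hlim.tendstoLocallyUniformlyOn
      (.of_forall fun x => (hdL x).differentiableOn)
      (eventually_mem_nhdsWithin.mono fun x hx s hs => hF x hx (L s) hs).frequently hisolated
  simpa [L] using h₀

end Hurwitz

theorem eval_derivative_ne_zero_of_convex_compl {p : ℂ[X]} {s : Set ℂ} (hs : Convex ℝ sᶜ)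
    (hp : 0 < p.degree) (h : ∀ y ∈ s, p.eval y ≠ 0) {y : ℂ} (hy : y ∈ s) :
    p.derivative.eval y ≠ 0 := by
  intro hzero
  have hder : p.derivative ≠ 0 := by
    simpa [Polynomial.derivative_eq_zero, Polynomial.natDegree_eq_zero_iff_degree_le_zero] using hp
  have hroots : p.rootSet ℂ ⊆ sᶜ := fun w hw hws =>
    h w hws (by simpa using Polynomial.aeval_eq_zero_of_mem_rootSet hw)
  refine convexHull_min hroots hs
    (Polynomial.rootSet_derivative_subset_convexHull_rootSet hp ?_) hy
  exact Polynomial.mem_rootSet.2 ⟨hder, by simpa using hzero⟩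

section StableFamilies

variable {σ : Type*}

/-- A polynomial `P` in one variable `y` with coefficients in `ℂ[z]` is Hurwitz-stable over `U` if
`P(z, y) ≠ 0` whenever `z ∈ U` and `Re y > 0`. -/
def HurwitzStableOn (U : Set (σ → ℂ)) (P : (MvPolynomial σ ℂ)[X]) : Prop :=
  ∀ z ∈ U, ∀ y : ℂ, 0 < y.re → (P.map (eval z)).eval y ≠ 0

theorem differentiable_eval_add_smul (p : MvPolynomial σ ℂ) (z w : σ → ℂ) :
    Differentiable ℂ fun s : ℂ => eval (z + s • w) p := by
  simp only [eval_eq, Pi.add_apply, Pi.smul_apply, smul_eq_mul]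
  fun_prop

namespace HurwitzStableOn

variable {U : Set (σ → ℂ)} {P : (MvPolynomial σ ℂ)[X]}

theorem reverse (h : HurwitzStableOn U P) : HurwitzStableOn U P.reverse := by
  intro z hz y hy hzero
  have hinv : 0 < (y⁻¹).re := by
    rw [Complex.inv_re]
    exact div_pos hy (Complex.normSq_pos.2 (by rintro rfl; simp at hy))
  have hy₀ : y⁻¹ ≠ 0 := by rintro h₀; simp [h₀] at hinv
  let _ := invertibleOfNonzero hy₀
  refine h z hz y⁻¹ hinv ?_
  rw [Polynomial.eval_map] at hzero ⊢
  rw [← Polynomial.eval₂_reverse_eq_zero_iff, invOf_eq_inv, inv_inv, hzero]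

theorem eval_coeff_zero_ne_zero (hU : IsOpen U) (h : HurwitzStableOn U P) (h₀ : P.coeff 0 ≠ 0)
    {z : σ → ℂ} (hz : z ∈ U) : eval z (P.coeff 0) ≠ 0 := by
  let F : ℂ → (σ → ℂ) → ℂ := fun y z => (P.map (eval z)).eval y
  have hF (y : ℂ) (z : σ → ℂ) :
      F y z = ∑ m ∈ range (P.natDegree + 1), eval z (P.coeff m) * y ^ m := by
    rw [← Polynomial.eval₂_eq_sum_range, ← Polynomial.eval_map]
  have hF₀ (z : σ → ℂ) : F 0 z = eval z (P.coeff 0) := by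
    rw [← Polynomial.coeff_map, Polynomial.coeff_zero_eq_eval_zero]
  have hcont : Continuous (Function.uncurry F) := by
    simp only [Function.uncurry_def, hF]
    exact continuous_finsetSum _ fun m _ =>
      ((MvPolynomial.continuous_eval _).comp continuous_snd).mul (continuous_fst.pow m)
  have hd (y : ℂ) (z w : σ → ℂ) : Differentiable ℂ fun s : ℂ => F y (z + s • w) := by
    simp only [hF]
    exact .fun_sum fun m _ => (differentiable_eval_add_smul _ z w).mul_const _
  have hne : ∃ w, F 0 w ≠ 0 := by
    contrapose! h₀
    exact MvPolynomial.funext fun w => by simpa [hF₀] using h₀ w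
  have hclosure : (0 : ℂ) ∈ closure {y : ℂ | 0 < y.re} := by
    simp [Complex.closure_setOfPred_lt_re]
  rw [← hF₀]
  exact hurwitz_ne_zero_of_mem_closure hclosure hU hz hcont hd (fun y hy z hz => h z hz y hy) hne

theorem eval_leadingCoeff_ne_zero (hU : IsOpen U) (h : HurwitzStableOn U P) (hP : P ≠ 0)
    {z : σ → ℂ} (hz : z ∈ U) : eval z P.leadingCoeff ≠ 0 := by
  rw [← Polynomial.coeff_zero_reverse]
  exact h.reverse.eval_coeff_zero_ne_zero hU (by simpa using hP) hz

theorem derivative (hU : IsOpen U) (h : HurwitzStableOn U P) (hP : 0 < P.natDegree) :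
    HurwitzStableOn U P.derivative := by
  intro z hz y hy
  have hlead : eval z P.leadingCoeff ≠ 0 :=
    h.eval_leadingCoeff_ne_zero hU (by rintro rfl; simp at hP) hz
  have hdeg : 0 < (P.map (eval z)).degree := by
    rwa [← Polynomial.natDegree_pos_iff_degree_pos,
      Polynomial.natDegree_map_of_leadingCoeff_ne_zero _ hlead]
  have hconv : Convex ℝ {y : ℂ | 0 < y.re}ᶜ := by
    simpa [Set.compl_ofPred] using convex_halfSpace_re_le 0
  rw [← Polynomial.derivative_map]
  exact eval_derivative_ne_zero_of_convex_compl hconv hdeg (h z hz) hy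

theorem eval_coeff_ne_zero (hU : IsOpen U) (h : HurwitzStableOn U P) {c : ℕ} (hc : P.coeff c ≠ 0)
    {z : σ → ℂ} (hz : z ∈ U) : eval z (P.coeff c) ≠ 0 := by
  induction c generalizing P with
  | zero => exact h.eval_coeff_zero_ne_zero hU hc hz
  | succ c ih =>
    have hdeg : 0 < P.natDegree := c.succ_pos.trans_le (Polynomial.le_natDegree_of_ne_zero hc)
    have hcoeff : P.derivative.coeff c = P.coeff (c + 1) * ((c + 1 : ℕ) : MvPolynomial σ ℂ) := by
      rw [Polynomial.coeff_derivative]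
      norm_cast
    have hder : eval z (P.derivative.coeff c) ≠ 0 :=
      ih (h.derivative hU hdeg) (by
        rw [hcoeff]
        exact mul_ne_zero hc (Nat.cast_ne_zero.2 c.succ_ne_zero))
    rw [hcoeff, map_mul] at hder
    exact left_ne_zero_of_mul hder

end HurwitzStableOn

end StableFamilies

section FilterTerms

variable {σ R : Type*} [CommSemiring R]

/-- The sum of the terms of `f` whose exponent satisfies `p`. -/
noncomputable def filterTerms (p : (σ →₀ ℕ) → Prop) [DecidablePred p] (f : MvPolynomial σ R) :
    MvPolynomial σ R :=
  ∑ m ∈ f.support with p m, monomial m (coeff m f)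

theorem coeff_filterTerms (p : (σ →₀ ℕ) → Prop) [DecidablePred p] (f : MvPolynomial σ R)
    (m : σ →₀ ℕ) : coeff m (filterTerms p f) = if p m then coeff m f else 0 := by
  classical
  simp only [filterTerms, coeff_sum, coeff_monomial, sum_ite_eq', mem_filter, mem_support_iff]
  aesop

theorem filterTerms_filterTerms (p q : (σ →₀ ℕ) → Prop) [DecidablePred p] [DecidablePred q]
    [DecidablePred fun m => p m ∧ q m] (f : MvPolynomial σ R) :
    filterTerms p (filterTerms q f) = filterTerms (fun m => p m ∧ q m) f := by
  ext m
  by_cases hp : p m <;> simp [coeff_filterTerms, hp]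

variable [DecidableEq σ]

/-- The polynomial `f` with each variable `z i`, `i ∈ T`, replaced by `y * z i`, viewed as a
polynomial in the new variable `y`. -/
noncomputable def blockScale (T : Finset σ) : MvPolynomial σ R →ₐ[R] (MvPolynomial σ R)[X] :=
  aeval fun i => (if i ∈ T then Polynomial.X else 1) * Polynomial.C (X i)

theorem eval_map_blockScale (T : Finset σ) (f : MvPolynomial σ R) (z : σ → R) (y : R) :
    ((blockScale T f).map (eval z)).eval y = eval (fun i => if i ∈ T then y * z i else z i) f := by
  induction f using MvPolynomial.induction_on with
  | C a => simp [blockScale]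
  | add f g hf hg => simp [hf, hg]
  | mul_X f i hf =>
    rw [map_mul, Polynomial.map_mul, Polynomial.eval_mul, hf]
    simp only [blockScale, aeval_X]
    by_cases hi : i ∈ T <;> simp [hi, mul_comm y]

theorem blockScale_monomial (T : Finset σ) (m : σ →₀ ℕ) (a : R) :
    blockScale T (monomial m a) = Polynomial.monomial (∑ i ∈ T, m i) (monomial m a) := by
  have hT : ∑ i ∈ T, m i = ∑ i ∈ m.support ∩ T, m i :=
    (sum_subset inter_subset_right (by simp +contextual)).symm
  simp only [blockScale, monomial_eq, Finsupp.prod, mul_pow, prod_mul_distrib,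
    ite_pow, one_pow, prod_ite_mem, prod_pow_eq_pow_sum, hT, map_mul, map_prod, map_pow,
    ← Polynomial.C_mul_X_pow_eq_monomial, Polynomial.algebraMap_apply, algebraMap_eq,
    aeval_C, aeval_X]
  ring

theorem coeff_blockScale (T : Finset σ) (f : MvPolynomial σ R) (c : ℕ) :
    (blockScale T f).coeff c = filterTerms (fun m => ∑ i ∈ T, m i = c) f := by
  conv_lhs => rw [f.as_sum]
  simp only [map_sum, Polynomial.finsetSum_coeff, blockScale_monomial, Polynomial.coeff_monomial,
    filterTerms, sum_filter]

end FilterTerms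

section BlockDegree

variable {σ : Type*} [DecidableEq σ] {f : MvPolynomial σ ℂ} {T : Finset σ} {c : ℕ}

theorem eval_filterTerms_ne_zero {U : Set (σ → ℂ)} {u : ℂ} (hU : IsOpen U) (hu : u ≠ 0)
    (h : ∀ z ∈ U, ∀ y : ℂ, 0 < y.re → eval (fun i => if i ∈ T then u * y * z i else z i) f ≠ 0)
    (hne : filterTerms (fun m => ∑ i ∈ T, m i = c) f ≠ 0) {z : σ → ℂ} (hz : z ∈ U) :
    eval z (filterTerms (fun m => ∑ i ∈ T, m i = c) f) ≠ 0 := by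
  let P : (MvPolynomial σ ℂ)[X] := (blockScale T f).comp (Polynomial.C (C u) * Polynomial.X)
  have hP : HurwitzStableOn U P := fun z hz y hy => by
    simpa [P, Polynomial.map_comp, Polynomial.eval_comp, eval_map_blockScale] using h z hz y hy
  have hcoeff : P.coeff c = filterTerms (fun m => ∑ i ∈ T, m i = c) f * C u ^ c := by
    rw [Polynomial.comp_C_mul_X_coeff, coeff_blockScale]
  have hPc : P.coeff c ≠ 0 := by
    rw [hcoeff]
    exact mul_ne_zero hne (pow_ne_zero c (C_ne_zero.2 hu))
  have := hP.eval_coeff_ne_zero hU hPc hz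
  rw [hcoeff, map_mul] at this
  exact left_ne_zero_of_mul this

theorem eval_exp_filterTerms_ne_zero [Finite σ] {V : Set (σ → ℂ)} (hV : IsOpen V) (ρ : ℂ)
    (h : ∀ x ∈ V, ∀ η : ℂ, |η.im| < Real.pi / 2 →
      eval (fun i => Complex.exp (if i ∈ T then x i + (ρ + η) else x i)) f ≠ 0)
    (hne : filterTerms (fun m => ∑ i ∈ T, m i = c) f ≠ 0) {x : σ → ℂ} (hx : x ∈ V) :
    eval (fun i => Complex.exp (x i)) (filterTerms (fun m => ∑ i ∈ T, m i = c) f) ≠ 0 := by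
  have hopen : IsOpenMap (Pi.map fun _ : σ => Complex.exp) :=
    .piMap (fun _ => Complex.isOpenMap_exp) (by simp [Filter.cofinite_eq_bot])
  refine eval_filterTerms_ne_zero (hopen V hV) (Complex.exp_ne_zero ρ) ?_ hne
    (Set.mem_image_of_mem _ hx)
  rintro _ ⟨x, hx, rfl⟩ y hy
  have hlog : |(Complex.log y).im| < Real.pi / 2 := by
    rw [Complex.log_im]
    exact Complex.abs_arg_lt_pi_div_two_iff.2 (.inl hy)
  have hy₀ : y ≠ 0 := by rintro rfl; simp at hy
  refine ne_of_eq_of_ne (congrArg (eval · f) (funext fun i => ?_)) (h x hx (Complex.log y) hlog)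
  split_ifs
  · rw [Pi.map_apply, Complex.exp_add, Complex.exp_add, Complex.exp_log hy₀, mul_comm]
  · rfl

end BlockDegree

section Strips

variable {σ ι : Type*} {β : ℝ} {T : ι → Finset σ} {s : Finset ι} {θ : ι → ℝ} {φ : ℝ}

/-- Logarithms of the points to be avoided by the zeros of a polynomial from which the blocks
`T j`, `j ∈ s`, have been extracted: on such a block the arguments lie in a window of width `β * π`
with arbitrary centre `θ j`, and on the remaining variables in a common window centred at `φ`. The
latter has width `π` for `s = ∅`, and loses `2 ^ #s * β * π` when a block is added to `s`. -/
def strips (β : ℝ) (T : ι → Finset σ) (s : Finset ι) (θ : ι → ℝ) (φ : ℝ) : Set (σ → ℂ) :=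
  {x | (∀ j ∈ s, ∀ i ∈ T j, |(x i).im - θ j| < β * Real.pi / 2) ∧
    ∀ i, (∀ j ∈ s, i ∉ T j) → |(x i).im - φ| < (1 + β - 2 ^ #s * β) * Real.pi / 2}

theorem isOpen_strips [Finite σ] : IsOpen (strips β T s θ φ) := by
  have hdist (i : σ) (a r : ℝ) : IsOpen {x : σ → ℂ | |(x i).im - a| < r} :=
    isOpen_lt (by fun_prop) continuous_const
  simp only [strips, Set.ofPred_and, Set.ofPred_forall]
  exact (isOpen_biInter_finset fun j _ => isOpen_biInter_finset fun i _ => hdist i _ _).inter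
    (isOpen_iInter_of_finite fun i => isOpen_iInter_of_finite fun _ => hdist i _ _)

theorem ite_add_mem_strips [DecidableEq σ] [DecidableEq ι] {J : ι} {x : σ → ℂ} {η : ℂ}
    (hβ : 0 < β) (hsβ : 2 ^ #s * β ≤ 1)
    (hJ : J ∉ s) (hdisj : ∀ j ∈ s, Disjoint (T j) (T J)) (hη : |η.im| < Real.pi / 2)
    (hx : x ∈ strips β T (insert J s) θ φ) :
    (fun i => if i ∈ T J then x i + ((φ - θ J : ℝ) * Complex.I + η) else x i) ∈
      strips β T s θ (φ + 2 ^ #s * β * η.im) := by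
  obtain ⟨hblock, hrest⟩ := hx
  have hε : 0 < 2 ^ #s * β := by positivity
  set ε : ℝ := 2 ^ #s * β
  refine ⟨fun j hj i hi => ?_, fun i hi => ?_⟩ <;> dsimp only
  · rw [if_neg (disjoint_left.1 (hdisj j hj) hi)]
    exact hblock j (mem_insert_of_mem hj) i hi
  · by_cases hiJ : i ∈ T J
    · have hxi := hblock J (mem_insert_self J s) i hiJ
      have hη' : |(1 - ε) * η.im| ≤ (1 - ε) * (Real.pi / 2) := by
        rw [abs_mul, abs_of_nonneg (sub_nonneg.2 hsβ)]
        exact mul_le_mul_of_nonneg_left hη.le (sub_nonneg.2 hsβ)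
      rw [if_pos hiJ]
      simp only [Complex.add_im, Complex.im_ofReal_mul, Complex.I_im, mul_one]
      calc |(x i).im + (φ - θ J + η.im) - (φ + ε * η.im)|
          = |(x i).im - θ J + (1 - ε) * η.im| := by ring_nf
        _ ≤ |(x i).im - θ J| + |(1 - ε) * η.im| := abs_add_le _ _
        _ < β * Real.pi / 2 + (1 - ε) * (Real.pi / 2) := add_lt_add_of_lt_of_le hxi hη'
        _ = (1 + β - ε) * Real.pi / 2 := by ring
    · have hxi := hrest i (by simpa [hiJ] using hi)
      have hη' : |ε * η.im| < ε * (Real.pi / 2) := by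
        rw [abs_mul, abs_of_pos hε]
        exact mul_lt_mul_of_pos_left hη hε
      rw [card_insert_of_notMem hJ, pow_succ', mul_assoc] at hxi
      rw [if_neg hiJ]
      calc |(x i).im - (φ + ε * η.im)|
          = |(x i).im - φ - ε * η.im| := by ring_nf
        _ ≤ |(x i).im - φ| + |ε * η.im| := abs_sub _ _
        _ < (1 + β - 2 * ε) * Real.pi / 2 + ε * (Real.pi / 2) := add_lt_add hxi hη'
        _ = (1 + β - ε) * Real.pi / 2 := by ring

end Strips

theorem eval_mul_of_isHomogeneous {σ R : Type*} [CommSemiring R] {f : MvPolynomial σ R} {d : ℕ}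
    (hf : f.IsHomogeneous d) (u : R) (z : σ → R) :
    eval (fun i => u * z i) f = u ^ d * eval z f := by
  simp only [eval_eq, mul_pow, prod_mul_distrib, prod_pow_eq_pow_sum, mul_sum]
  refine sum_congr rfl fun m hm => ?_
  rw [show ∑ i ∈ m.support, m i = d by
    simpa [Finsupp.weight_apply, Finsupp.sum] using hf (mem_support_iff.1 hm)]
  ring

section Homogeneous

variable {σ : Type*} {g : MvPolynomial σ ℂ} {d : ℕ}

theorem eval_exp_ne_zero_of_isHomogeneous (hhom : g.IsHomogeneous d)
    (h : ∀ x : σ → ℂ, (∀ i, |(x i).im| < Real.pi / 2) → eval (fun i => Complex.exp (x i)) g ≠ 0)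
    {φ : ℝ} {x : σ → ℂ} (hx : ∀ i, |(x i).im - φ| < Real.pi / 2) :
    eval (fun i => Complex.exp (x i)) g ≠ 0 := by
  have hscale (i : σ) :
      Complex.exp (x i) = Complex.exp (φ * Complex.I) * Complex.exp (x i - φ * Complex.I) := by
    rw [← Complex.exp_add, add_sub_cancel]
  simp only [hscale]
  rw [eval_mul_of_isHomogeneous hhom]
  exact mul_ne_zero (pow_ne_zero d (Complex.exp_ne_zero _)) (h _ fun i => by simpa using hx i)

theorem filterTerms_eq_zero_or_eval_exp_ne_zero [Finite σ] {ι : Type*}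
    (hhom : g.IsHomogeneous d)
    (h : ∀ x : σ → ℂ, (∀ i, |(x i).im| < Real.pi / 2) → eval (fun i => Complex.exp (x i)) g ≠ 0)
    {β : ℝ} (hβ : 0 < β) {T : ι → Finset σ} (c : ι → ℕ) {s : Finset ι} (hsβ : 2 ^ #s * β ≤ 1)
    (hT : (s : Set ι).PairwiseDisjoint T) :
    filterTerms (fun m => ∀ j ∈ s, ∑ i ∈ T j, m i = c j) g = 0 ∨
      ∀ θ φ, ∀ x ∈ strips β T s θ φ, eval (fun i => Complex.exp (x i))
        (filterTerms (fun m => ∀ j ∈ s, ∑ i ∈ T j, m i = c j) g) ≠ 0 := by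
  classical
  induction s using Finset.induction_on with
  | empty =>
    refine .inr fun θ φ x hx => ?_
    have hg : filterTerms (fun m => ∀ j ∈ (∅ : Finset ι), ∑ i ∈ T j, m i = c j) g = g := by
      ext m
      simp [coeff_filterTerms]
    rw [hg]
    exact eval_exp_ne_zero_of_isHomogeneous hhom h fun i => by simpa [strips] using hx.2 i
  | insert J s hJ ih =>
    have hε : 2 ^ #s * β ≤ 1 := by
      rw [card_insert_of_notMem hJ, pow_succ', mul_assoc] at hsβ
      linarith [show 0 < 2 ^ #s * β by positivity]
    have hdisj : ∀ j ∈ s, Disjoint (T j) (T J) := fun j hj =>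
      hT (by simp [hj]) (by simp) (by rintro rfl; exact hJ hj)
    have hstep : filterTerms (fun m => ∀ j ∈ insert J s, ∑ i ∈ T j, m i = c j) g =
        filterTerms (fun m => ∑ i ∈ T J, m i = c J)
          (filterTerms (fun m => ∀ j ∈ s, ∑ i ∈ T j, m i = c j) g) := by
      simp only [filterTerms_filterTerms, forall_mem_insert]
    rw [hstep]
    refine or_iff_not_imp_left.2 fun hne θ φ x hx => ?_
    refine eval_exp_filterTerms_ne_zero isOpen_strips ((φ - θ J : ℝ) * Complex.I)
      (fun x hx η hη => ?_) hne hx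
    refine (ih hε (hT.subset (by simp))).resolve_left ?_ θ _ _
      (ite_add_mem_strips hβ hε hJ hdisj hη hx)
    intro h₀
    exact hne (by rw [h₀]; simp [filterTerms])

end Homogeneous

theorem partition_degree_part_sectorStable_general {n : ℕ} {ι : Type*}
    (g : MvPolynomial (Fin n) ℂ) (d : ℕ) (hhom : g.IsHomogeneous d) (hstable : SectorStable 1 g)
    (s : Finset ι) (T : ι → Finset (Fin n)) (hT : (s : Set ι).PairwiseDisjoint T) (c : ι → ℕ) :
    filterTerms (fun m => ∀ j ∈ s, ∑ i ∈ T j, m i = c j) g = 0 ∨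
      SectorStable (1 / 2 ^ #s) (filterTerms (fun m => ∀ j ∈ s, ∑ i ∈ T j, m i = c j) g) := by
  have h (x : Fin n → ℂ) (hx : ∀ i, |(x i).im| < Real.pi / 2) :
      eval (fun i => Complex.exp (x i)) g ≠ 0 := by
    refine hstable _ fun i => ⟨Complex.exp_ne_zero _, ?_⟩
    rw [one_mul, Complex.abs_arg_lt_pi_div_two_iff, Complex.exp_re]
    exact .inl (mul_pos (Real.exp_pos _) (Real.cos_pos_of_mem_Ioo (abs_lt.1 (hx i))))
  have hβ : 2 ^ #s * (1 / 2 ^ #s : ℝ) = 1 := mul_one_div_cancel (by positivity)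
  refine (filterTerms_eq_zero_or_eval_exp_ne_zero hhom h (by positivity) c hβ.le hT).imp_right
    fun hstrips z hz => ?_
  have hlog : (fun i => Complex.log (z i)) ∈ strips (1 / 2 ^ #s) T s 0 0 := by
    simp only [strips, Set.mem_ofPred_eq, hβ, Complex.log_im, Pi.zero_apply, sub_zero,
      add_sub_cancel_left]
    exact ⟨fun j _ i _ => (hz i).2, fun i _ => (hz i).2⟩
  simpa only [Complex.exp_log (hz _).1] using hstrips 0 0 _ hlog

/-- If `g` is a homogeneous `Γ₁`-stable polynomial, `T₁,…,T_k` a partition of `[n]`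
and `c ∈ ℤ_{≥0}^k`, then the sum `h` of the terms of `g` whose `(T₁,…,T_k)`-degree
equals `(c₁,…,c_k)` is either identically zero or `Γ_{1/2^k}`-stable. -/
theorem partition_degree_part_sectorStable {n k : ℕ}
    (g : MvPolynomial (Fin n) ℂ) (d : ℕ) (hhom : g.IsHomogeneous d)
    (hstable : SectorStable 1 g)
    (T : Fin k → Finset (Fin n))
    (hdisj : ∀ a b : Fin k, a ≠ b → Disjoint (T a) (T b))
    (hcover : Finset.univ.biUnion T = (Finset.univ : Finset (Fin n)))
    (c : Fin k → ℕ) :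
    (∑ m ∈ g.support.filter (fun m => ∀ j : Fin k, (∑ i ∈ T j, m i) = c j),
        MvPolynomial.monomial m (MvPolynomial.coeff m g)) = 0 ∨
      SectorStable ((1 : ℝ) / 2 ^ k)
        (∑ m ∈ g.support.filter (fun m => ∀ j : Fin k, (∑ i ∈ T j, m i) = c j),
          MvPolynomial.monomial m (MvPolynomial.coeff m g)) := by
  simpa [filterTerms] using partition_degree_part_sectorStable_general g d hhom hstable univ T
    (fun a _ b _ => hdisj a b) c
end

section
/- Let α, β > 0 with α + β ≥ 1, and let p(x,y) = Σ_{i=0}^{d} c_i x^i y^{d−i} be a homogeneous bivariate polynomial with coefficients c_i ∈ ℂ. Suppose p(x,y) ≠ 0 whenever x and y are nonzero complex numbers with |Arg x| ≤ απ/2 and |Arg y| ≤ βπ/2. Then the set {i : c_i ≠ 0} has no holes: if c_i ≠ 0 and c_j ≠ 0 for some i < j, then c_l ≠ 0 for every l with i ≤ l ≤ j. -/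
open Finset

/-!
Dehomogenize `p` to `q(z) = ∑ c_i z^i`. Since `α + β ≥ 1`, every nonzero `z` in the closed right
half-plane is a quotient `x / y` of points of the two sectors, so all nonzero roots of `q` lie in
the open left half-plane. Dividing `q` by a power of `z`, one may assume that the convex hull of its
roots misses `0`. By Gauss–Lucas no derivative of `q` of order at most `deg q` vanishes at `0`, and
these values are, up to factorials, the coefficients of `q`.
-/

open Complex Polynomial

open scoped Pointwise

theorem rootSet_iterate_derivative_subset_convexHull_rootSet (p : ℂ[X]) (k : ℕ) :
    (derivative^[k] p).rootSet ℂ ⊆ convexHull ℝ (p.rootSet ℂ) := by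
  induction k with
  | zero => exact subset_convexHull ℝ _
  | succ k ih =>
    rw [Function.iterate_succ_apply']
    by_cases hdeg : 0 < (derivative^[k] p).degree
    · exact (rootSet_derivative_subset_convexHull_rootSet hdeg).trans
        (convexHull_min ih (convex_convexHull ℝ _))
    · rw [derivative_of_natDegree_zero (natDegree_eq_zero_iff_degree_le_zero.mpr (not_lt.mp hdeg)),
        rootSet_zero]
      exact Set.empty_subset _

theorem iterate_derivative_ne_zero_of_le_degree {R : Type*} [Semiring R] [IsAddTorsionFree R]
    {p : R[X]} {k : ℕ} (hk : k ≤ p.degree) : derivative^[k] p ≠ 0 := by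
  intro h
  have hp : p ≠ 0 := by
    rintro rfl
    simp at hk
  have hk_nat : k ≤ p.natDegree := le_natDegree_of_coe_le_degree hk
  have hcoeff := coeff_iterate_derivative (k := k) p (p.natDegree - k)
  rw [h, coeff_zero, Nat.sub_add_cancel hk_nat, coeff_natDegree] at hcoeff
  exact smul_ne_zero (Nat.descFactorial_pos.mpr hk_nat).ne' (leadingCoeff_ne_zero.mpr hp)
    hcoeff.symm

theorem coeff_ne_zero_of_zero_notMem_convexHull_rootSet_s8 {p : ℂ[X]} {k : ℕ}
    (hp : 0 ∉ convexHull ℝ (p.rootSet ℂ)) (hk : k ≤ p.degree) : p.coeff k ≠ 0 := by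
  contrapose! hp
  refine rootSet_iterate_derivative_subset_convexHull_rootSet p k ?_
  rw [mem_rootSet, coe_aeval_eq_eval, ← coeff_zero_eq_eval_zero, coeff_iterate_derivative,
    zero_add, hp, smul_zero]
  exact ⟨iterate_derivative_ne_zero_of_le_degree hk, rfl⟩

theorem ordConnected_support_of_zero_notMem_convexHull {q : ℂ[X]}
    (hq : 0 ∉ convexHull ℝ (q.rootSet ℂ \ {0})) : (q.support : Set ℕ).OrdConnected := by
  rcases eq_or_ne q 0 with rfl | hq0
  · simpa using Set.ordConnected_empty
  obtain ⟨r, hqr, hXr⟩ := exists_eq_pow_rootMultiplicity_mul_and_not_dvd q hq0 0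
  generalize q.rootMultiplicity 0 = m at hqr
  rw [C_0, sub_zero] at hqr hXr
  have roots_r : r.rootSet ℂ ⊆ q.rootSet ℂ \ {0} := by
    intro z hz
    rw [mem_rootSet, coe_aeval_eq_eval] at hz
    refine ⟨?_, ?_⟩
    · rw [mem_rootSet, coe_aeval_eq_eval]
      exact ⟨hq0, by rw [hqr, eval_mul, hz.2, mul_zero]⟩
    · rintro rfl
      exact hXr (X_dvd_iff.mpr (by rw [coeff_zero_eq_eval_zero, hz.2]))
  have hull_r : 0 ∉ convexHull ℝ (r.rootSet ℂ) := fun h ↦ hq (convexHull_mono roots_r h)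
  have mem_support_q (n : ℕ) : n ∈ (q.support : Set ℕ) ↔ m ≤ n ∧ r.coeff (n - m) ≠ 0 := by
    rw [mem_coe, mem_support_iff, hqr, coeff_X_pow_mul', ne_eq, ite_eq_right_iff, Classical.not_imp]
  refine ⟨fun i hi j hj l hl ↦ ?_⟩
  rw [mem_support_q] at hi hj ⊢
  have hlj : ((l - m : ℕ) : WithBot ℕ) ≤ (j - m : ℕ) := by
    exact_mod_cast Nat.sub_le_sub_right hl.2 m
  exact ⟨hi.1.trans hl.1, coeff_ne_zero_of_zero_notMem_convexHull_rootSet_s8 hull_r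
    (hlj.trans (le_degree_of_ne_zero hj.2))⟩

theorem abs_arg_exp_mul_I_le (θ : ℝ) : |arg (exp (θ * I))| ≤ |θ| := by
  rcases lt_or_ge |θ| Real.pi with hθ | hθ
  · rw [arg_exp_mul_I, (toIocMod_eq_self Real.two_pi_pos).mpr]
    have := abs_lt.mp hθ
    exact ⟨this.1, by linarith⟩
  · exact (abs_arg_le_pi _).trans hθ

/-- The closed sector of aperture `α * π` centered on the positive real axis, without its apex:
the region from which the two arguments of the homogeneous polynomial are taken. -/
def closedSector (α : ℝ) : Set ℂ := {z | z ≠ 0 ∧ |z.arg| ≤ α * Real.pi / 2}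

theorem closedSector_mono : Monotone closedSector := fun α β hαβ z hz ↦
  ⟨hz.1, hz.2.trans (by gcongr)⟩

theorem mem_closedSector_one {z : ℂ} : z ∈ closedSector 1 ↔ z ≠ 0 ∧ 0 ≤ z.re :=
  and_congr_right fun _ ↦ by rw [one_mul, abs_arg_le_pi_div_two_iff]

theorem closedSector_add_subset_div {α β : ℝ} (hα : 0 ≤ α) (hβ : 0 ≤ β) :
    closedSector (α + β) ⊆ closedSector α / closedSector β := by
  rintro z ⟨hz, hz_arg⟩
  obtain ⟨s, hs, t, ht, hst⟩ : z.arg ∈ Metric.closedBall (0 : ℝ) (α * Real.pi / 2) -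
      Metric.closedBall (0 : ℝ) (β * Real.pi / 2) := by
    rw [closedBall_sub_closedBall (by positivity) (by positivity), sub_zero,
      mem_closedBall_zero_iff, Real.norm_eq_abs]
    linarith
  rw [mem_closedBall_zero_iff, Real.norm_eq_abs] at hs ht
  refine ⟨‖z‖ * exp (s * I), ⟨?_, ?_⟩, exp (t * I), ⟨exp_ne_zero _, ?_⟩, ?_⟩
  · exact mul_ne_zero (ofReal_ne_zero.mpr (norm_ne_zero_iff.mpr hz)) (exp_ne_zero _)
  · rw [arg_real_mul _ (norm_pos_iff.mpr hz)]
    exact (abs_arg_exp_mul_I_le s).trans hs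
  · exact (abs_arg_exp_mul_I_le t).trans ht
  · calc ‖z‖ * exp (s * I) / exp (t * I) = ‖z‖ * exp (z.arg * I) := by
          rw [mul_div_assoc, ← exp_sub, ← sub_mul, ← ofReal_sub, ← hst]
      _ = z := norm_mul_exp_arg_mul_I z

theorem ordConnected_support_of_eval_ne_zero_on_closedSector_one {q : ℂ[X]}
    (hq : ∀ z ∈ closedSector 1, q.eval z ≠ 0) : (q.support : Set ℕ).OrdConnected := by
  refine ordConnected_support_of_zero_notMem_convexHull fun h ↦ ?_
  have roots_re_neg : q.rootSet ℂ \ {0} ⊆ {z | z.re < 0} := by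
    rintro z ⟨hz, hz0⟩
    rw [mem_rootSet, coe_aeval_eq_eval] at hz
    by_contra hre
    exact hq z (mem_closedSector_one.mpr ⟨hz0, not_lt.mp hre⟩) hz.2
  exact lt_irrefl (0 : ℝ) (convexHull_min roots_re_neg (convex_halfSpace_re_lt 0) h)

theorem sum_mul_pow_mul_pow_sub_eq_mul_pow {K : Type*} [Semifield K] (c : ℕ → K) (d : ℕ) (x : K)
    {y : K} (hy : y ≠ 0) : ∑ i ∈ range (d + 1), c i * x ^ i * y ^ (d - i) =
      (∑ i ∈ range (d + 1), c i * (x / y) ^ i) * y ^ d := by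
  rw [sum_mul]
  refine sum_congr rfl fun i hi ↦ ?_
  calc c i * x ^ i * y ^ (d - i) = c i * (x / y * y) ^ i * y ^ (d - i) := by
        rw [div_mul_cancel₀ x hy]
    _ = c i * (x / y) ^ i * (y ^ i * y ^ (d - i)) := by ring
    _ = c i * (x / y) ^ i * y ^ d := by
        rw [pow_mul_pow_sub y (mem_range_succ_iff.mp hi)]

/-- If the homogeneous bivariate polynomial `p(x,y) = Σ_{i=0}^d c_i x^i y^{d-i}` has no
zeros with `x, y` nonzero, `|Arg x| ≤ απ/2` and `|Arg y| ≤ βπ/2`, where `α + β ≥ 1`,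
then the set of indices of its nonzero coefficients has no holes. -/
theorem no_holes_of_closed_sector_stable (α β : ℝ) (hα : 0 < α) (hβ : 0 < β)
    (hαβ : 1 ≤ α + β) (d : ℕ) (c : ℕ → ℂ)
    (hstable : ∀ x y : ℂ, x ≠ 0 → y ≠ 0 →
      |x.arg| ≤ α * Real.pi / 2 → |y.arg| ≤ β * Real.pi / 2 →
      (∑ i ∈ Finset.range (d + 1), c i * x ^ i * y ^ (d - i)) ≠ 0)
    (i j l : ℕ) (hij : i < j) (hjd : j ≤ d) (hil : i ≤ l) (hlj : l ≤ j)
    (hci : c i ≠ 0) (hcj : c j ≠ 0) : c l ≠ 0 := by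
  let q : ℂ[X] := ∑ n ∈ range (d + 1), monomial n (c n)
  have mem_support_q {n : ℕ} (hn : n ≤ d) : n ∈ (q.support : Set ℕ) ↔ c n ≠ 0 := by
    simp [q, coeff_monomial, hn]
  have q_ne_zero : ∀ z ∈ closedSector 1, q.eval z ≠ 0 := by
    intro z hz
    obtain ⟨x, hx, y, hy, rfl⟩ :=
      closedSector_add_subset_div hα.le hβ.le (closedSector_mono hαβ hz)
    have hxy := hstable x y hx.1 hy.1 hx.2 hy.2
    rw [sum_mul_pow_mul_pow_sub_eq_mul_pow c d x hy.1] at hxy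
    simpa only [q, eval_finsetSum, eval_monomial] using left_ne_zero_of_mul hxy
  rw [← mem_support_q (by lia)] at hci hcj ⊢
  exact (ordConnected_support_of_eval_ne_zero_on_closedSector_one q_ne_zero).out hci hcj ⟨hil, hlj⟩
end

section
/- Let α₁,…,αₙ ∈ (0,2] and let U = Γ_{α₁} × ⋯ × Γ_{αₙ} ⊆ ℂⁿ. Let g ∈ ℂ[z₁,…,zₙ] be a nonzero polynomial with g(z) ≠ 0 for all z ∈ U, and let S ⊆ [n]. Define the S-degree of a monomial z₁^{t₁}⋯zₙ^{tₙ} as Σ_{i∈S} t_i, and let k_max^S and k_min^S be the maximum and minimum S-degree over monomials of g with nonzero coefficient. Then the sum g^S_{k_max} of the terms of g of S-degree exactly k_max^S, and the sum g^S_{k_min} of the terms of S-degree exactly k_min^S, are both nonvanishing on U. -/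
open MvPolynomial Finset

/-!
Scale the coordinates of `g` by `exp (s * w i)` and multiply the result by `exp (-(s * k))`, where
`k` is the largest weight of a monomial of `g`. This keeps `g` nonvanishing on every domain that is
invariant under the scaling, and as `s → ∞` it converges to the part of `g` of weight `k`, so the
claim is an instance of Hurwitz's theorem. The smallest weight is the largest one for `-w`, and the
`S`-degree is the weight given by the indicator function of `S`.

Polynomials of bounded degree admit an elementary proof of Hurwitz's theorem: if `P` has no root
within distance `‖y - x‖` of `x`, each factor of `P` grows by at most `2` between `x` and `y`, so
`P.eval y` is controlled by `P.eval x`. If the limit vanished at `x`, it would vanish near `x`.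
-/

open Filter Topology

section Hurwitz

theorem norm_eval_le_two_pow_mul_norm_eval {K : Type*} [NormedField K] {P : Polynomial K}
    (hP : P.Splits) {x y : K} (hroots : ∀ r ∈ P.roots, ‖y - x‖ ≤ ‖x - r‖) :
    ‖P.eval y‖ ≤ 2 ^ P.natDegree * ‖P.eval x‖ := by
  have norm_eval (t : K) :
      ‖P.eval t‖ = ‖P.leadingCoeff‖ * (P.roots.map (‖t - ·‖)).prod := by
    rw [hP.eval_eq_prod_roots, norm_mul, ← normHom_apply (P.roots.map _).prod, map_multiset_prod,
      Multiset.map_map]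
    rfl
  have hfactor : ∀ r ∈ P.roots, ‖y - r‖ ≤ 2 * ‖x - r‖ := fun r hr ↦ by
    linarith [norm_sub_le_norm_sub_add_norm_sub y x r, hroots r hr]
  calc ‖P.eval y‖ = ‖P.leadingCoeff‖ * (P.roots.map (‖y - ·‖)).prod := norm_eval y
    _ ≤ ‖P.leadingCoeff‖ * (P.roots.map (2 * ‖x - ·‖)).prod := by
      gcongr
      exact Multiset.prod_map_le_prod_map₀ _ _ (fun _ _ ↦ norm_nonneg _) hfactor
    _ = 2 ^ P.natDegree * ‖P.eval x‖ := by
      rw [norm_eval x, Multiset.prod_map_mul, Multiset.map_const', Multiset.prod_replicate,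
        hP.natDegree_eq_card_roots]
      ring

variable {K ι : Type*} [NontriviallyNormedField K] [IsAlgClosed K] {l : Filter ι} [l.NeBot] {d : ℕ}

theorem polynomial_eval_ne_zero_of_tendsto {f : ι → Polynomial K} {p : Polynomial K} (hp : p ≠ 0)
    (hdeg : ∀ i, (f i).natDegree ≤ d) {x : K} {V : Set K} (hV : V ∈ 𝓝 x)
    (hlim : ∀ y ∈ V, Tendsto (fun i ↦ (f i).eval y) l (𝓝 (p.eval y)))
    (hf : ∀ i, ∀ y ∈ V, (f i).eval y ≠ 0) : p.eval x ≠ 0 := by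
  intro hx
  obtain ⟨ε, hε, hball⟩ := Metric.mem_nhds_iff.1 hV
  have eval_bound (y : K) (hy : y ∈ Metric.ball x ε) (i : ι) :
      ‖(f i).eval y‖ ≤ 2 ^ d * ‖(f i).eval x‖ := by
    have hroots : ∀ r ∈ (f i).roots, ‖y - x‖ ≤ ‖x - r‖ := fun r hr ↦ by
      by_contra! hlt
      rw [mem_ball_iff_norm] at hy
      exact hf i r (hball (mem_ball_iff_norm'.2 (hlt.trans hy))) (Polynomial.isRoot_of_mem_roots hr)
    calc ‖(f i).eval y‖ ≤ 2 ^ (f i).natDegree * ‖(f i).eval x‖ :=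
          norm_eval_le_two_pow_mul_norm_eval (IsAlgClosed.splits _) hroots
      _ ≤ 2 ^ d * ‖(f i).eval x‖ := by gcongr; exacts [one_le_two, hdeg i]
  have eval_eq_zero (y : K) (hy : y ∈ Metric.ball x ε) : p.eval y = 0 := by
    have hle : ‖p.eval y‖ ≤ 2 ^ d * ‖p.eval x‖ :=
      le_of_tendsto_of_tendsto' (hlim y (hball hy)).norm
        ((hlim x (mem_of_mem_nhds hV)).norm.const_mul _) (eval_bound y hy)
    simpa [hx] using hle
  exact hp (Polynomial.eq_zero_of_infinite_isRoot p
    ((infinite_of_mem_nhds x (Metric.ball_mem_nhds x hε)).mono eval_eq_zero))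

/-- The restriction of a multivariate polynomial to the line through `z` and `w`, as a polynomial
in the affine parameter that is `0` at `z` and `1` at `w`. -/
noncomputable def restrictToLine {σ R : Type*} [CommRing R] (z w : σ → R) :
    MvPolynomial σ R →ₐ[R] Polynomial R :=
  aeval fun i ↦ Polynomial.C (z i) + Polynomial.X * Polynomial.C (w i - z i)

theorem eval_restrictToLine {σ R : Type*} [CommRing R] (z w : σ → R) (g : MvPolynomial σ R)
    (t : R) : (restrictToLine z w g).eval t = eval (z + t • (w - z)) g := by
  have hcomp : (Polynomial.aeval t).comp (restrictToLine z w) = aeval (z + t • (w - z)) := by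
    ext i
    simp [restrictToLine]
  exact DFunLike.congr_fun hcomp g

theorem natDegree_restrictToLine_le {σ R : Type*} [CommRing R] (z w : σ → R)
    (g : MvPolynomial σ R) : (restrictToLine z w g).natDegree ≤ g.totalDegree := by
  rw [← mul_one g.totalDegree]
  exact aeval_natDegree_le g le_rfl _ fun i ↦ by compute_degree

theorem mvPolynomial_eval_ne_zero_of_tendsto {σ : Type*} {f : ι → MvPolynomial σ K}
    {p : MvPolynomial σ K} (hp : p ≠ 0) (hdeg : ∀ i, (f i).totalDegree ≤ d)
    {U : Set (σ → K)} (hU : IsOpen U)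
    (hlim : ∀ z ∈ U, Tendsto (fun i ↦ eval z (f i)) l (𝓝 (eval z p)))
    (hf : ∀ i, ∀ z ∈ U, eval z (f i) ≠ 0) {z : σ → K} (hz : z ∈ U) : eval z p ≠ 0 := by
  obtain ⟨w, hw⟩ : ∃ w, eval w p ≠ 0 := by
    by_contra! h
    exact hp (MvPolynomial.funext fun w ↦ by rw [h w, map_zero])
  have hline : Continuous fun t : K ↦ z + t • (w - z) := by fun_prop
  have hne : restrictToLine z w p ≠ 0 := fun h ↦ hw <| by
    simpa [h] using (eval_restrictToLine z w p 1).symm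
  have key := polynomial_eval_ne_zero_of_tendsto (f := fun i ↦ restrictToLine z w (f i)) hne
    (fun i ↦ (natDegree_restrictToLine_le z w (f i)).trans (hdeg i))
    (x := 0) ((hU.preimage hline).mem_nhds (by simpa using hz))
    (fun t ht ↦ by simpa only [eval_restrictToLine] using hlim _ ht)
    (fun i t ht ↦ by simpa only [eval_restrictToLine] using hf i _ ht)
  simpa [eval_restrictToLine] using key

end Hurwitz

section Weights

theorem weight_neg {σ M : Type*} [AddCommGroup M] (w : σ → M) (m : σ →₀ ℕ) :
    Finsupp.weight (-w) m = -Finsupp.weight w m := by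
  simp [Finsupp.weight_apply, Finsupp.sum]

theorem weight_indicator_one {σ M : Type*} [AddCommMonoidWithOne M] (S : Finset σ) (m : σ →₀ ℕ) :
    Finsupp.weight ((S : Set σ).indicator (1 : σ → M)) m = (∑ i ∈ S, m i : ℕ) := by
  classical
  rw [Finsupp.weight_apply,
    Finsupp.sum_of_support_subset m (Finset.subset_union_left (s₂ := S)) _ (by simp),
    ← Finset.sum_subset Finset.subset_union_right fun i _ hi ↦ by simp [hi], Nat.cast_sum]
  exact Finset.sum_congr rfl fun i hi ↦ by simp [hi]

theorem weightedHomogeneousComponent_neg {σ M R : Type*} [AddCommGroup M] [CommSemiring R]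
    (w : σ → M) (k : M) (g : MvPolynomial σ R) :
    weightedHomogeneousComponent (-w) (-k) g = weightedHomogeneousComponent w k g := by
  classical
  ext m
  simp only [coeff_weightedHomogeneousComponent, weight_neg, neg_inj]

/-- The set of `w`-weights of the monomials that occur in `g`. -/
def monomialWeights {σ M R : Type*} [AddCommMonoid M] [CommSemiring R] (w : σ → M)
    (g : MvPolynomial σ R) : Set M :=
  (fun m : σ →₀ ℕ ↦ Finsupp.weight w m) '' g.support

theorem monomialWeights_neg {σ M R : Type*} [AddCommGroup M] [CommSemiring R] (w : σ → M)
    (g : MvPolynomial σ R) : monomialWeights (-w) g = Neg.neg '' monomialWeights w g := by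
  simp only [monomialWeights, weight_neg, Set.image_image]

theorem isGreatest_monomialWeights_indicator_one_iff {σ R : Type*} [CommSemiring R] {S : Finset σ}
    {g : MvPolynomial σ R} {k : ℕ} :
    IsGreatest (monomialWeights ((S : Set σ).indicator (1 : σ → ℝ)) g) k ↔
      (∃ m ∈ g.support, ∑ i ∈ S, m i = k) ∧ ∀ m ∈ g.support, ∑ i ∈ S, m i ≤ k := by
  simp [IsGreatest, mem_upperBounds, monomialWeights, weight_indicator_one, -Nat.cast_sum]

theorem isLeast_monomialWeights_indicator_one_iff {σ R : Type*} [CommSemiring R] {S : Finset σ}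
    {g : MvPolynomial σ R} {k : ℕ} :
    IsLeast (monomialWeights ((S : Set σ).indicator (1 : σ → ℝ)) g) k ↔
      (∃ m ∈ g.support, ∑ i ∈ S, m i = k) ∧ ∀ m ∈ g.support, k ≤ ∑ i ∈ S, m i := by
  simp [IsLeast, mem_lowerBounds, monomialWeights, weight_indicator_one, -Nat.cast_sum]

theorem weightedHomogeneousComponent_ne_zero {σ M R : Type*} [AddCommMonoid M] [CommSemiring R]
    {w : σ → M} {g : MvPolynomial σ R} {k : M} (hk : k ∈ monomialWeights w g) :
    weightedHomogeneousComponent w k g ≠ 0 := by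
  classical
  obtain ⟨m, hm, rfl⟩ := hk
  refine ne_zero_iff.2 ⟨m, ?_⟩
  rwa [coeff_weightedHomogeneousComponent, if_pos rfl, ← mem_support_iff]

end Weights

section Deformation

variable {σ : Type*} (w : σ → ℝ)

/-- The action at time `s` of the one-parameter group that scales the `i`-th coordinate at the
exponential rate `w i`. -/
noncomputable def weightScale (s : ℝ) (z : σ → ℂ) : σ → ℂ :=
  fun i ↦ (Real.exp (s * w i) : ℂ) * z i

theorem weightScale_neg (s : ℝ) (z : σ → ℂ) : weightScale (-w) s z = weightScale w (-s) z := by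
  funext i
  simp [weightScale]

/-- The polynomial `exp (-(s * k)) * g (weightScale w s z)`, given by its coefficients. Its limit
as `s → ∞` is the part of `g` of weight `k` if `k` is the largest weight of a monomial of `g`. -/
noncomputable def weightDeform (k : ℝ) (g : MvPolynomial σ ℂ) (s : ℝ) : MvPolynomial σ ℂ :=
  ∑ m ∈ g.support, monomial m ((Real.exp (s * (Finsupp.weight w m - k)) : ℂ) * coeff m g)

theorem totalDegree_weightDeform_le (k : ℝ) (g : MvPolynomial σ ℂ) (s : ℝ) :
    (weightDeform w k g s).totalDegree ≤ g.totalDegree :=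
  totalDegree_finsetSum_le fun _ hm ↦
    (totalDegree_monomial_le _ _).trans (le_totalDegree hm)

theorem prod_weightScale_pow (s : ℝ) (z : σ → ℂ) (m : σ →₀ ℕ) :
    (m.prod fun i t ↦ weightScale w s z i ^ t) =
      Real.exp (s * Finsupp.weight w m) * m.prod fun i t ↦ z i ^ t := by
  simp only [weightScale, mul_pow, Finsupp.weight_apply, Finsupp.sum, Finset.mul_sum,
    Real.exp_sum, Finsupp.prod, Finset.prod_mul_distrib, Complex.ofReal_prod]
  congr! 2 with i
  rw [nsmul_eq_mul, mul_left_comm, Real.exp_nat_mul, Complex.ofReal_pow]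

theorem eval_weightDeform (k : ℝ) (g : MvPolynomial σ ℂ) (s : ℝ) (z : σ → ℂ) :
    eval z (weightDeform w k g s) = Real.exp (-(s * k)) * eval (weightScale w s z) g := by
  conv_rhs => rw [g.as_sum]
  simp only [weightDeform, map_sum, eval_monomial, prod_weightScale_pow, Finset.mul_sum]
  refine Finset.sum_congr rfl fun m _ ↦ ?_
  rw [mul_sub, sub_eq_neg_add, Real.exp_add, Complex.ofReal_mul]
  ring

theorem tendsto_exp_mul_atTop_of_nonpos {a : ℝ} (ha : a ≤ 0) :
    Tendsto (fun s ↦ Real.exp (s * a)) atTop (𝓝 (if a = 0 then 1 else 0)) := by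
  obtain rfl | hneg := ha.eq_or_lt
  · simp
  · rw [if_neg hneg.ne]
    exact Real.tendsto_exp_atBot.comp (tendsto_id.atTop_mul_const_of_neg hneg)

variable {w} {g : MvPolynomial σ ℂ} {k : ℝ}

theorem tendsto_eval_weightDeform (hk : k ∈ upperBounds (monomialWeights w g))
    (z : σ → ℂ) : Tendsto (fun s ↦ eval z (weightDeform w k g s)) atTop
      (𝓝 (eval z (weightedHomogeneousComponent w k g))) := by
  simp only [weightDeform, weightedHomogeneousComponent_apply, Finset.sum_filter, map_sum]
  refine tendsto_finsetSum _ fun m hm ↦ ?_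
  have hle : Finsupp.weight w m - k ≤ 0 := sub_nonpos.2 (hk (Set.mem_image_of_mem _ hm))
  have hcoeff := (Complex.continuous_ofReal.tendsto _).comp (tendsto_exp_mul_atTop_of_nonpos hle)
  convert (hcoeff.mul_const (coeff m g)).mul_const (m.prod fun i t ↦ z i ^ t) using 2
  · simp [eval_monomial]
  · split_ifs <;> simp_all [eval_monomial, sub_eq_zero]

variable {U : Set (σ → ℂ)}

theorem eval_weightedHomogeneousComponent_ne_zero (hU : IsOpen U)
    (hscale : ∀ s, ∀ z ∈ U, weightScale w s z ∈ U) (hstable : ∀ z ∈ U, eval z g ≠ 0)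
    (hk : IsGreatest (monomialWeights w g) k) {z : σ → ℂ} (hz : z ∈ U) :
    eval z (weightedHomogeneousComponent w k g) ≠ 0 := by
  refine mvPolynomial_eval_ne_zero_of_tendsto (weightedHomogeneousComponent_ne_zero hk.1)
    (totalDegree_weightDeform_le w k g) hU
    (fun z _ ↦ tendsto_eval_weightDeform hk.2 z) (fun s z hz ↦ ?_) hz
  rw [eval_weightDeform]
  exact mul_ne_zero (by exact_mod_cast Real.exp_ne_zero _) (hstable _ (hscale s z hz))

theorem extreme_S_degree_parts_stable_general (hU : IsOpen U)
    (hscale : ∀ s, ∀ z ∈ U, weightScale w s z ∈ U) (hstable : ∀ z ∈ U, eval z g ≠ 0)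
    {kmax kmin : ℝ} (hkmax : IsGreatest (monomialWeights w g) kmax)
    (hkmin : IsLeast (monomialWeights w g) kmin) :
    (∀ z ∈ U, eval z (weightedHomogeneousComponent w kmax g) ≠ 0) ∧
      ∀ z ∈ U, eval z (weightedHomogeneousComponent w kmin g) ≠ 0 := by
  refine ⟨fun z hz ↦ eval_weightedHomogeneousComponent_ne_zero hU hscale hstable hkmax hz,
    fun z hz ↦ ?_⟩
  rw [← weightedHomogeneousComponent_neg]
  have hneg : Antitone (Neg.neg : ℝ → ℝ) := fun _ _ ↦ neg_le_neg
  exact eval_weightedHomogeneousComponent_ne_zero hU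
    (fun s z hz ↦ weightScale_neg w s z ▸ hscale (-s) z hz) hstable
    (monomialWeights_neg w g ▸ hneg.map_isLeast hkmin) hz

end Deformation

section Sectors

theorem isOpen_setOf_inSector (α : ℝ) : IsOpen {z : ℂ | inSector α z} := by
  have hcont : ContinuousOn (InnerProductGeometry.angle (1 : ℂ)) {0}ᶜ := fun z hz ↦
    ((InnerProductGeometry.continuousAt_angle (x := ((1 : ℂ), z)) one_ne_zero hz).comp
      (f := fun y ↦ ((1 : ℂ), y)) (by fun_prop)).continuousWithinAt
  convert hcont.isOpen_inter_preimage isOpen_compl_singleton (isOpen_Iio (a := α * Real.pi / 2))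
  ext z
  exact and_congr_right fun hz ↦ by
    rw [Set.mem_preimage, Set.mem_Iio, Complex.angle_one_left hz]

theorem inSector.ofReal_mul {α : ℝ} {z : ℂ} (hz : inSector α z) {t : ℝ} (ht : 0 < t) :
    inSector α (t * z) :=
  ⟨mul_ne_zero (Complex.ofReal_ne_zero.2 ht.ne') hz.1,
    by rw [Complex.arg_real_mul z ht]; exact hz.2⟩

theorem isOpen_setOf_forall_inSector {σ : Type*} [Finite σ] (α : σ → ℝ) :
    IsOpen {z : σ → ℂ | ∀ i, inSector (α i) (z i)} := by
  rw [Set.ofPred_forall]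
  exact isOpen_iInter_of_finite fun i ↦
    (isOpen_setOf_inSector (α i)).preimage (continuous_apply (A := fun _ ↦ ℂ) i)

end Sectors

/-- If `g` is a nonzero polynomial nonvanishing on `U = Γ_{α₁} × ⋯ × Γ_{αₙ}` and
`S ⊆ [n]`, then the parts of `g` of maximal and of minimal `S`-degree are also
nonvanishing on `U`. -/
theorem extreme_S_degree_parts_stable {n : ℕ} (αv : Fin n → ℝ)
    (hαv : ∀ i, 0 < αv i ∧ αv i ≤ 2)
    (g : MvPolynomial (Fin n) ℂ) (hg : g ≠ 0)
    (hstable : ∀ z : Fin n → ℂ, (∀ i, inSector (αv i) (z i)) →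
      MvPolynomial.eval z g ≠ 0)
    (S : Finset (Fin n)) (kmax kmin : ℕ)
    (hkmaxmem : ∃ m ∈ g.support, (∑ i ∈ S, m i) = kmax)
    (hkmaxub : ∀ m ∈ g.support, (∑ i ∈ S, m i) ≤ kmax)
    (hkminmem : ∃ m ∈ g.support, (∑ i ∈ S, m i) = kmin)
    (hkminlb : ∀ m ∈ g.support, kmin ≤ (∑ i ∈ S, m i)) :
    (∀ z : Fin n → ℂ, (∀ i, inSector (αv i) (z i)) →
      MvPolynomial.eval z (∑ m ∈ g.support.filter (fun m => (∑ i ∈ S, m i) = kmax),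
        MvPolynomial.monomial m (MvPolynomial.coeff m g)) ≠ 0) ∧
    (∀ z : Fin n → ℂ, (∀ i, inSector (αv i) (z i)) →
      MvPolynomial.eval z (∑ m ∈ g.support.filter (fun m => (∑ i ∈ S, m i) = kmin),
        MvPolynomial.monomial m (MvPolynomial.coeff m g)) ≠ 0) := by
  simpa [weightedHomogeneousComponent_apply, weight_indicator_one, -Nat.cast_sum] using
    extreme_S_degree_parts_stable_general (isOpen_setOf_forall_inSector αv)
      (fun s z hz i ↦ (hz i).ofReal_mul (Real.exp_pos _)) hstable
      (isGreatest_monomialWeights_indicator_one_iff.2 ⟨hkmaxmem, hkmaxub⟩)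
      (isLeast_monomialWeights_indicator_one_iff.2 ⟨hkminmem, hkminlb⟩)
end
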